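/- arXiv:1409.5877 — 4 statements merged into one kernel-verified Lean document; each statement's English description precedes it below -/
import Mathlib

section
/- Let p > 1 and a ≥ −1. Let f ≡ 0 and let g ∈ C¹(ℝ) satisfy g ≥ 0 on ℝ, g not identically zero, and ∫_{−1}^{1} g(y) dy > 0. Suppose −1 ≤ a < 0. Then there exist positive constants ε₀ = ε₀(g,a,p) and C = C(g,a,p) such that for every ε with 0 < ε ≤ ε₀ and every T > C·ε^{−(p−1)/(1−a)}, there is no function u ∈ C(ℝ×[0,T]) satisfying u(x,t) = (ε/2)∫_{x−t}^{x+t} g(y) dy + (1/2)∬_{D(x,t)} |u(y,s)|^p (1+y²)^{−(1+a)/2} dy ds for all (x,t) ∈ ℝ×[0,T]. In particular the lifespan T_ε of the C² solution of the corresponding initial value problem satisfies T_ε ≤ C·ε^{−(p−1)/(1−a)}. -/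
open MeasureTheory Real Set Filter

/-!
Inside the backward light cone with apex `(T/2, T)` and height `T/8`, the datum keeps `u` above
`A = ε/2 * ∫ y in -1..1, g y`, and the weight is comparable to `k = T^{-(1+a)}` because the cone
stays at distance of order `T` from `x = 0`. If `u ≥ M` on a cone, then discarding a bottom slab of
thickness `d` improves the bound to `k M^p d² / 2`. With geometrically shrinking slabs each step
doubles the bound as soon as `k A^{p-1} T²` is large, that is, as soon as `ε^{p-1} T^{1-a}` is
large; then `u` would be infinite at the apex.
-/

/-- The double integral of `F` over the backward characteristic triangle `D(x, t)`, written as an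
iterated integral with the time variable outermost. -/
noncomputable def coneIntegral (F : ℝ → ℝ → ℝ) (x t : ℝ) : ℝ :=
  ∫ s in (0 : ℝ)..t, ∫ y in (x - t + s)..(x + t - s), F y s

/-- The top part, of height `H`, of the backward light cone with apex `(x, t)`. -/
def backwardCone (x t H : ℝ) : Set (ℝ × ℝ) :=
  {z | t - H ≤ z.2 ∧ |z.1 - x| ≤ t - z.2}

/-- `u` is a continuous solution on `ℝ × [0, T]` of the integral equation for the semilinear wave
equation `u_tt - u_xx = f(x, u)`, where `u₀` is the free wave with the same initial data. -/
def IsMildSolution (f u₀ : ℝ → ℝ → ℝ) (T : ℝ) (u : ℝ → ℝ → ℝ) : Prop :=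
  ContinuousOn (Function.uncurry u) (univ ×ˢ Icc 0 T) ∧
    ∀ x t, t ∈ Icc 0 T → u x t = u₀ x t + 1 / 2 * coneIntegral (fun y s ↦ f y (u y s)) x t

/-- The nonlinearity `|v|^p (1 + x²)^{-(1+a)/2}`. -/
noncomputable def weightedPower (p a x v : ℝ) : ℝ :=
  |v| ^ p / (1 + x ^ 2) ^ ((1 + a) / 2)

/-- The free wave with vanishing initial position and initial velocity `ε g`. -/
noncomputable def freeWave (ε : ℝ) (g : ℝ → ℝ) (x t : ℝ) : ℝ :=
  ε / 2 * ∫ y in (x - t)..(x + t), g y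

/-- The bound which `k A^{p-1} H²` must stay below when `u ≥ A` and the source is at least
`k |u|^p` on a backward cone of height `H`; `2 ^ ((1 - p) / 2)` is the ratio of the successive cone
heights, for which the bounds grow exactly geometrically. -/
noncomputable def blowupThreshold (p : ℝ) : ℝ :=
  4 / (1 - 2 ^ ((1 - p) / 2)) ^ 2

lemma continuous_intervalIntegral_of_continuous {X E : Type*}
    [TopologicalSpace X] [NormedAddCommGroup E] [NormedSpace ℝ E] {F : ℝ → X → E} {a b : X → ℝ}
    (hF : Continuous (Function.uncurry F)) (ha : Continuous a) (hb : Continuous b) :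
    Continuous fun s ↦ ∫ y in a s..b s, F y s := by
  have hF_swap : Continuous (Function.uncurry fun s y ↦ F y s) := hF.comp continuous_swap
  have hF_slice (s : X) : Continuous fun y ↦ F y s := hF.uncurry_right s
  have hprimitive {c : X → ℝ} (hc : Continuous c) :
      Continuous fun s ↦ ∫ y in (0 : ℝ)..c s, F y s :=
    intervalIntegral.continuous_parametric_intervalIntegral_of_continuous hF_swap hc
  exact ((hprimitive hb).sub (hprimitive ha)).congr fun s ↦
    intervalIntegral.integral_interval_sub_left ((hF_slice s).intervalIntegrable _ _)
      ((hF_slice s).intervalIntegrable _ _)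

section ConeIntegral

variable {F : ℝ → ℝ → ℝ} {x t : ℝ}

lemma coneIntegral_nonneg (hF : ∀ y s, 0 ≤ F y s) (ht : 0 ≤ t) : 0 ≤ coneIntegral F x t :=
  intervalIntegral.integral_nonneg ht fun s hs ↦
    intervalIntegral.integral_nonneg (by linarith [hs.2]) fun y _ ↦ hF y s

lemma coneIntegral_congr {F' : ℝ → ℝ → ℝ} (ht : 0 ≤ t)
    (h : ∀ y, ∀ s ∈ Icc 0 t, F y s = F' y s) : coneIntegral F x t = coneIntegral F' x t :=
  intervalIntegral.integral_congr fun s hs ↦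
    intervalIntegral.integral_congr fun y _ ↦ h y s (uIcc_of_le ht ▸ hs)

lemma le_integral_slice_of_le_on_backwardCone {H K s : ℝ} (hF : Continuous (Function.uncurry F))
    (hK : ∀ z ∈ backwardCone x t H, K ≤ F z.1 z.2) (hs : s ∈ Icc (t - H) t) :
    2 * K * (t - s) ≤ ∫ y in (x - t + s)..(x + t - s), F y s :=
  calc 2 * K * (t - s) = ∫ _ in (x - t + s)..(x + t - s), K := by
        rw [intervalIntegral.integral_const, smul_eq_mul]; ring
    _ ≤ _ := intervalIntegral.integral_mono_on (by linarith [hs.2])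
        intervalIntegrable_const ((hF.uncurry_right s).intervalIntegrable _ _) fun y hy ↦
          hK (y, s) ⟨hs.1, abs_le.2 ⟨by linarith [hy.1], by linarith [hy.2]⟩⟩

lemma mul_sq_le_coneIntegral {H K : ℝ} (hF : Continuous (Function.uncurry F))
    (hF_nonneg : ∀ y s, 0 ≤ F y s) (hH : 0 ≤ H) (hHt : H ≤ t)
    (hK : ∀ z ∈ backwardCone x t H, K ≤ F z.1 z.2) : K * H ^ 2 ≤ coneIntegral F x t := by
  have slice_continuous : Continuous fun s ↦ ∫ y in (x - t + s)..(x + t - s), F y s :=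
    continuous_intervalIntegral_of_continuous hF (by fun_prop) (by fun_prop)
  calc K * H ^ 2 = ∫ s in (t - H)..t, 2 * K * (t - s) := by
        rw [intervalIntegral.integral_const_mul, intervalIntegral.integral_sub (by simp) (by simp),
          integral_id, intervalIntegral.integral_const, smul_eq_mul]
        ring
    _ ≤ ∫ s in (t - H)..t, ∫ y in (x - t + s)..(x + t - s), F y s :=
        intervalIntegral.integral_mono_on (by linarith)
          (Continuous.intervalIntegrable (by fun_prop) _ _)
          (slice_continuous.intervalIntegrable _ _)
          fun s hs ↦ le_integral_slice_of_le_on_backwardCone hF hK hs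
    _ ≤ coneIntegral F x t := by
        refine intervalIntegral.integral_mono_interval (by linarith) (by linarith) le_rfl ?_
          (slice_continuous.intervalIntegrable _ _)
        filter_upwards [ae_restrict_mem measurableSet_Ioc] with s hs
        exact intervalIntegral.integral_nonneg (by linarith [hs.2]) fun y _ ↦ hF_nonneg y s

end ConeIntegral

lemma backwardCone_subset_backwardCone {x t d x₀ t₀ H : ℝ}
    (h : (x, t) ∈ backwardCone x₀ t₀ (H - d)) : backwardCone x t d ⊆ backwardCone x₀ t₀ H := by
  rintro ⟨y, s⟩ ⟨hs, hy⟩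
  obtain ⟨ht, hx⟩ := h
  dsimp only at *
  exact ⟨by dsimp only; linarith, by linarith [abs_sub_le y x x₀]⟩

lemma blowupThreshold_nonneg (p : ℝ) : 0 ≤ blowupThreshold p := by
  unfold blowupThreshold; positivity

section BlowUp

variable {F u : ℝ → ℝ → ℝ} {p k x₀ t₀ H A : ℝ}

lemma mul_rpow_mul_sq_le_on_backwardCone {M d : ℝ} (hp : 0 ≤ p) (hk : 0 ≤ k)
    (hF : Continuous (Function.uncurry F)) (hF_nonneg : ∀ y s, 0 ≤ F y s) (hHt : H ≤ t₀)
    (hFu : ∀ z ∈ backwardCone x₀ t₀ H, k * |u z.1 z.2| ^ p ≤ F z.1 z.2)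
    (hu : ∀ z ∈ backwardCone x₀ t₀ H, 1 / 2 * coneIntegral F z.1 z.2 ≤ u z.1 z.2)
    (hM : 0 ≤ M) (hMu : ∀ z ∈ backwardCone x₀ t₀ H, M ≤ u z.1 z.2) (hd : 0 ≤ d) :
    ∀ z ∈ backwardCone x₀ t₀ (H - d), k * M ^ p * d ^ 2 / 2 ≤ u z.1 z.2 := by
  rintro ⟨x, t⟩ hz
  have hsub : backwardCone x t d ⊆ backwardCone x₀ t₀ H := backwardCone_subset_backwardCone hz
  have apex_mem : (x, t) ∈ backwardCone x t d := by simp [backwardCone, hd]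
  have source_ge : ∀ z ∈ backwardCone x t d, k * M ^ p ≤ F z.1 z.2 := fun z hz ↦
    calc k * M ^ p ≤ k * |u z.1 z.2| ^ p := by
          gcongr
          exact (hMu z (hsub hz)).trans (le_abs_self _)
      _ ≤ F z.1 z.2 := hFu z (hsub hz)
  have hdt : d ≤ t := by linarith [hz.1]
  linarith [hu _ (hsub apex_mem), mul_sq_le_coneIntegral hF hF_nonneg hd hdt source_ge]

lemma mul_two_pow_rpow_mul_ratio_pow_sq (hA : 0 < A) (n : ℕ) :
    (A * 2 ^ n) ^ p * ((2 ^ ((1 - p) / 2)) ^ n) ^ 2 = A * 2 ^ n * A ^ (p - 1) := by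
  have hratio : ((2 ^ ((1 - p) / 2) : ℝ) ^ n) ^ 2 = (2 ^ n) ^ (1 - p) := by
    rw [← pow_mul, ← rpow_natCast, ← rpow_natCast, ← rpow_mul (by norm_num),
      ← rpow_mul (by norm_num)]
    push_cast
    ring_nf
  calc (A * 2 ^ n) ^ p * ((2 ^ ((1 - p) / 2)) ^ n) ^ 2
      = A ^ p * ((2 ^ n) ^ p * (2 ^ n) ^ (1 - p)) := by
        rw [hratio, mul_rpow hA.le (by positivity), mul_assoc]
    _ = A ^ p * 2 ^ n := by rw [← rpow_add (by positivity), add_sub_cancel, rpow_one]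
    _ = A * 2 ^ n * A ^ (p - 1) := by rw [rpow_sub_one hA.ne']; field_simp

lemma mul_two_pow_le_on_backwardCone (hp : 1 < p) (hk : 0 ≤ k)
    (hF : Continuous (Function.uncurry F)) (hF_nonneg : ∀ y s, 0 ≤ F y s)
    (hH : 0 ≤ H) (hHt : H ≤ t₀)
    (hFu : ∀ z ∈ backwardCone x₀ t₀ H, k * |u z.1 z.2| ^ p ≤ F z.1 z.2)
    (hu : ∀ z ∈ backwardCone x₀ t₀ H, 1 / 2 * coneIntegral F z.1 z.2 ≤ u z.1 z.2)
    (hA : 0 < A) (hAu : ∀ z ∈ backwardCone x₀ t₀ H, A ≤ u z.1 z.2)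
    (hlarge : blowupThreshold p ≤ k * A ^ (p - 1) * H ^ 2) (n : ℕ) :
    ∀ z ∈ backwardCone x₀ t₀ (H * (2 ^ ((1 - p) / 2)) ^ n), A * 2 ^ n ≤ u z.1 z.2 := by
  set q : ℝ := 2 ^ ((1 - p) / 2) with hq
  have hq0 : 0 < q := by positivity
  have hq1 : q < 1 := rpow_lt_one_of_one_lt_of_neg one_lt_two (by linarith)
  rw [blowupThreshold, ← hq, div_le_iff₀ (pow_pos (sub_pos.2 hq1) 2)] at hlarge
  induction n with
  | zero => simpa using hAu
  | succ n ih =>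
    have hHn : H * q ^ n ≤ H := mul_le_of_le_one_right hH (pow_le_one₀ hq0.le hq1.le)
    have cone_subset : backwardCone x₀ t₀ (H * q ^ n) ⊆ backwardCone x₀ t₀ H :=
      fun z hz ↦ ⟨by linarith [hz.1], hz.2⟩
    have hd : 0 ≤ H * q ^ n * (1 - q) := mul_nonneg (by positivity) (sub_nonneg.2 hq1.le)
    have doubling : A * 2 ^ (n + 1) ≤ k * (A * 2 ^ n) ^ p * (H * q ^ n * (1 - q)) ^ 2 / 2 :=
      calc A * 2 ^ (n + 1) = A * 2 ^ n * 4 / 2 := by ring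
        _ ≤ A * 2 ^ n * (k * A ^ (p - 1) * H ^ 2 * (1 - q) ^ 2) / 2 := by gcongr
        _ = k * (A * 2 ^ n * A ^ (p - 1)) * H ^ 2 * (1 - q) ^ 2 / 2 := by ring
        _ = k * ((A * 2 ^ n) ^ p * (q ^ n) ^ 2) * H ^ 2 * (1 - q) ^ 2 / 2 := by
          rw [hq, mul_two_pow_rpow_mul_ratio_pow_sq hA]
        _ = k * (A * 2 ^ n) ^ p * (H * q ^ n * (1 - q)) ^ 2 / 2 := by ring
    have hshrink : H * q ^ (n + 1) = H * q ^ n - H * q ^ n * (1 - q) := by ring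
    rw [hshrink]
    exact fun z hz ↦ doubling.trans <| mul_rpow_mul_sq_le_on_backwardCone (by linarith) hk hF
      hF_nonneg (hHn.trans hHt) (fun z hz ↦ hFu z (cone_subset hz))
      (fun z hz ↦ hu z (cone_subset hz)) (by positivity) ih hd z hz

theorem mul_rpow_mul_sq_lt_blowupThreshold (hp : 1 < p) (hk : 0 ≤ k)
    (hF : Continuous (Function.uncurry F)) (hF_nonneg : ∀ y s, 0 ≤ F y s)
    (hH : 0 ≤ H) (hHt : H ≤ t₀)
    (hFu : ∀ z ∈ backwardCone x₀ t₀ H, k * |u z.1 z.2| ^ p ≤ F z.1 z.2)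
    (hu : ∀ z ∈ backwardCone x₀ t₀ H, 1 / 2 * coneIntegral F z.1 z.2 ≤ u z.1 z.2)
    (hA : 0 < A) (hAu : ∀ z ∈ backwardCone x₀ t₀ H, A ≤ u z.1 z.2) :
    k * A ^ (p - 1) * H ^ 2 < blowupThreshold p := by
  by_contra! hlarge
  have apex_ge (n : ℕ) : A * 2 ^ n ≤ u x₀ t₀ :=
    mul_two_pow_le_on_backwardCone hp hk hF hF_nonneg hH hHt hFu hu hA hAu hlarge n (x₀, t₀)
      ⟨sub_le_self _ (by positivity), by simp⟩
  obtain ⟨n, hn⟩ := pow_unbounded_of_one_lt (u x₀ t₀ / A) one_lt_two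
  exact (apex_ge n).not_gt ((div_lt_iff₀' hA).1 hn)

end BlowUp

lemma IsMildSolution.exists_continuous {f u₀ u : ℝ → ℝ → ℝ} {T : ℝ} (hT : 0 ≤ T)
    (hu : IsMildSolution f u₀ T u) :
    ∃ v, Continuous (Function.uncurry v) ∧ IsMildSolution f u₀ T v := by
  let v : ℝ → ℝ → ℝ := fun x t ↦ u x (projIcc 0 T hT t)
  have hv_eq (x : ℝ) {t : ℝ} (ht : t ∈ Icc 0 T) : v x t = u x t := by
    simp only [v, projIcc_of_mem hT ht]
  have hv : Continuous (Function.uncurry v) :=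
    hu.1.comp_continuous (f := fun z : ℝ × ℝ ↦ (z.1, (projIcc 0 T hT z.2 : ℝ)))
      (continuous_fst.prodMk (continuous_subtype_val.comp (continuous_projIcc.comp continuous_snd)))
      fun z ↦ ⟨mem_univ _, (projIcc 0 T hT z.2).2⟩
  refine ⟨v, hv, hv.continuousOn, fun x t ht ↦ ?_⟩
  rw [hv_eq x ht, hu.2 x t ht]
  congr 2
  exact coneIntegral_congr ht.1 fun y s hs ↦ by rw [hv_eq y ⟨hs.1, hs.2.trans ht.2⟩]

section WeightedPower

variable {p a : ℝ}

lemma weightedPower_nonneg (x v : ℝ) : 0 ≤ weightedPower p a x v := by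
  unfold weightedPower; positivity

lemma continuous_weightedPower_comp {u : ℝ → ℝ → ℝ} (hp : 0 ≤ p)
    (hu : Continuous (Function.uncurry u)) :
    Continuous (Function.uncurry fun y s ↦ weightedPower p a y (u y s)) := by
  have hweight (y : ℝ) : 0 < 1 + y ^ 2 := by positivity
  refine (hu.abs.rpow_const fun _ ↦ Or.inr hp).div ?_ fun z ↦ (rpow_pos_of_pos (hweight z.1) _).ne'
  exact Continuous.rpow_const (by fun_prop) fun z ↦ Or.inl (hweight z.1).ne'

lemma rpow_le_rpow_abs_mul_rpow {c x X b : ℝ} (hc : 1 ≤ c) (hX : 0 < X) (hXx : X / c ≤ x)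
    (hxX : x ≤ X) : x ^ b ≤ c ^ |b| * X ^ b := by
  have hc0 : 0 < c := by linarith
  have hx : 0 < x := (div_pos hX hc0).trans_le hXx
  rcases le_total 0 b with hb | hb
  · calc x ^ b ≤ X ^ b := rpow_le_rpow hx.le hxX hb
      _ ≤ c ^ |b| * X ^ b :=
        le_mul_of_one_le_left (by positivity) (one_le_rpow hc (abs_nonneg b))
  · calc x ^ b ≤ (X / c) ^ b := rpow_le_rpow_of_nonpos (div_pos hX hc0) hXx hb
      _ = c ^ |b| * X ^ b := by
        rw [div_rpow hX.le hc0.le, abs_of_nonpos hb, rpow_neg hc0.le]; field_simp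

lemma one_add_sq_rpow_le_on_backwardCone {T : ℝ} (hT : 2 ≤ T) {z : ℝ × ℝ}
    (hz : z ∈ backwardCone (T / 2) T (T / 8)) :
    (1 + z.1 ^ 2) ^ ((1 + a) / 2) ≤ 16 ^ |(1 + a) / 2| * T ^ (1 + a) := by
  obtain ⟨hs, hy⟩ := hz
  obtain ⟨hy1, hy2⟩ := abs_le.1 hy
  calc (1 + z.1 ^ 2) ^ ((1 + a) / 2) ≤ 16 ^ |(1 + a) / 2| * (T ^ 2) ^ ((1 + a) / 2) :=
        rpow_le_rpow_abs_mul_rpow (by norm_num) (by positivity) (by nlinarith) (by nlinarith)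
    _ = 16 ^ |(1 + a) / 2| * T ^ (1 + a) := by
      rw [← rpow_natCast, ← rpow_mul (by linarith), Nat.cast_ofNat, mul_div_cancel₀ _ two_ne_zero]

lemma mul_rpow_abs_le_weightedPower_on_backwardCone {T : ℝ} (hT : 2 ≤ T) {z : ℝ × ℝ}
    (hz : z ∈ backwardCone (T / 2) T (T / 8)) (v : ℝ) :
    (16 ^ |(1 + a) / 2| * T ^ (1 + a))⁻¹ * |v| ^ p ≤ weightedPower p a z.1 v := by
  rw [weightedPower, div_eq_inv_mul (_ ^ p)]
  gcongr
  exact one_add_sq_rpow_le_on_backwardCone hT hz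

end WeightedPower

section FreeWave

variable {ε T : ℝ} {g : ℝ → ℝ}

lemma freeWave_nonneg (hε : 0 ≤ ε) (hg : ∀ x, 0 ≤ g x) {x t : ℝ} (ht : 0 ≤ t) :
    0 ≤ freeWave ε g x t :=
  mul_nonneg (by linarith) (intervalIntegral.integral_nonneg (by linarith) fun y _ ↦ hg y)

lemma le_freeWave_on_backwardCone (hε : 0 ≤ ε) (hgi : LocallyIntegrable g) (hg : ∀ x, 0 ≤ g x)
    (hT : 4 ≤ T) {z : ℝ × ℝ} (hz : z ∈ backwardCone (T / 2) T (T / 8)) :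
    ε / 2 * (∫ y in (-1 : ℝ)..1, g y) ≤ freeWave ε g z.1 z.2 := by
  obtain ⟨hs, hy⟩ := hz
  obtain ⟨hy1, hy2⟩ := abs_le.1 hy
  unfold freeWave
  gcongr
  exact intervalIntegral.integral_mono_interval (by linarith) (by norm_num) (by linarith)
    (Eventually.of_forall hg) ((hgi.integrableOn_isCompact isCompact_uIcc).intervalIntegrable)

end FreeWave

theorem IsMildSolution.rpow_mul_rpow_lt {p a ε T : ℝ} {g : ℝ → ℝ} {u : ℝ → ℝ → ℝ} (hp : 1 < p)
    (hgi : LocallyIntegrable g) (hg : ∀ x, 0 ≤ g x) (hgint : 0 < ∫ y in (-1 : ℝ)..1, g y)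
    (hε : 0 < ε) (hT : 4 ≤ T) (hu : IsMildSolution (weightedPower p a) (freeWave ε g) T u) :
    (ε / 2 * ∫ y in (-1 : ℝ)..1, g y) ^ (p - 1) * T ^ (1 - a)
      < 64 * 16 ^ |(1 + a) / 2| * blowupThreshold p := by
  have hT0 : 0 < T := by linarith
  obtain ⟨v, hv, -, hv_eq⟩ := hu.exists_continuous hT0.le
  set A := ε / 2 * ∫ y in (-1 : ℝ)..1, g y
  set F : ℝ → ℝ → ℝ := fun y s ↦ weightedPower p a y (v y s)
  have hF_nonneg (y s : ℝ) : 0 ≤ F y s := weightedPower_nonneg y (v y s)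
  have time_mem {z : ℝ × ℝ} (hz : z ∈ backwardCone (T / 2) T (T / 8)) : z.2 ∈ Icc 0 T :=
    ⟨by linarith [hz.1], by linarith [hz.2, abs_nonneg (z.1 - T / 2)]⟩
  have criterion : (16 ^ |(1 + a) / 2| * T ^ (1 + a))⁻¹ * A ^ (p - 1) * (T / 8) ^ 2
      < blowupThreshold p := by
    refine mul_rpow_mul_sq_lt_blowupThreshold (F := F) (u := v) (x₀ := T / 2) (t₀ := T) hp
      (by positivity) (continuous_weightedPower_comp (by linarith) hv) hF_nonneg
      (by positivity) (by linarith)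
      (fun z hz ↦ mul_rpow_abs_le_weightedPower_on_backwardCone (by linarith) hz _)
      (fun z hz ↦ ?_) (by positivity) (fun z hz ↦ ?_) <;> rw [hv_eq _ _ (time_mem hz)]
    · exact le_add_of_nonneg_left (freeWave_nonneg hε.le hg (time_mem hz).1)
    · exact (le_freeWave_on_backwardCone hε.le hgi hg hT hz).trans <| le_add_of_nonneg_right <|
        mul_nonneg (by norm_num) (coneIntegral_nonneg hF_nonneg (time_mem hz).1)
  have hT_exponents : T ^ 2 = T ^ (1 - a) * T ^ (1 + a) := by
    rw [← rpow_add hT0, ← rpow_natCast]; norm_num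
  calc A ^ (p - 1) * T ^ (1 - a)
      = 64 * 16 ^ |(1 + a) / 2| *
          ((16 ^ |(1 + a) / 2| * T ^ (1 + a))⁻¹ * A ^ (p - 1) * (T / 8) ^ 2) := by
        rw [div_pow, hT_exponents]; field_simp; norm_num
    _ < _ := by gcongr

lemma le_rpow_mul_rpow_of_rpow_mul_rpow_le {B ε r s T : ℝ} (hB : 0 ≤ B) (hε : 0 < ε) (hr : 0 < r)
    (hT : B ^ (1 / r) * ε ^ (-s / r) ≤ T) : B ≤ ε ^ s * T ^ r := by
  have hpow : B * ε ^ (-s) ≤ T ^ r :=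
    calc B * ε ^ (-s) = (B ^ (1 / r) * ε ^ (-s / r)) ^ r := by
          rw [mul_rpow (by positivity) (by positivity), ← rpow_mul hB, ← rpow_mul hε.le,
            div_mul_cancel₀ _ hr.ne', div_mul_cancel₀ _ hr.ne', rpow_one]
      _ ≤ T ^ r := rpow_le_rpow (by positivity) hT hr.le
  rwa [rpow_neg hε.le, mul_inv_le_iff₀' (rpow_pos_of_pos hε s)] at hpow

theorem stmt_0_general {p a : ℝ} (hp : 1 < p) (ha : a < 1) {g : ℝ → ℝ}
    (hgi : LocallyIntegrable g) (hg : ∀ x, 0 ≤ g x) (hgint : 0 < ∫ y in (-1 : ℝ)..1, g y) :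
    ∃ C > (0 : ℝ), ∀ ε : ℝ, 0 < ε → ε ≤ 1 → ∀ T : ℝ, C * ε ^ (-(p - 1) / (1 - a)) < T →
      ¬ ∃ u, IsMildSolution (weightedPower p a) (freeWave ε g) T u := by
  set G := ∫ y in (-1 : ℝ)..1, g y
  have ha' : 0 < 1 - a := sub_pos.2 ha
  set B := 64 * 16 ^ |(1 + a) / 2| * blowupThreshold p / (G / 2) ^ (p - 1) with hB
  have hB0 : 0 ≤ B :=
    div_nonneg (mul_nonneg (by positivity) (blowupThreshold_nonneg p)) (by positivity)
  refine ⟨max 4 (B ^ (1 / (1 - a))), by positivity, ?_⟩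
  rintro ε hε hε1 T hT ⟨u, hu⟩
  have hεpow : 1 ≤ ε ^ (-(p - 1) / (1 - a)) :=
    one_le_rpow_of_pos_of_le_one_of_nonpos hε hε1
      (div_nonpos_of_nonpos_of_nonneg (by linarith) ha'.le)
  have hT4 : 4 ≤ T :=
    ((le_max_left _ _).trans (le_mul_of_one_le_right (by positivity) hεpow)).trans hT.le
  have hBT : B ≤ ε ^ (p - 1) * T ^ (1 - a) :=
    le_rpow_mul_rpow_of_rpow_mul_rpow_le hB0 hε ha' <|
      (mul_le_mul_of_nonneg_right (le_max_right _ _) (by positivity)).trans hT.le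
  have upper := hu.rpow_mul_rpow_lt hp hgi hg hgint hε hT4
  rw [hB, div_le_iff₀ (by positivity)] at hBT
  rw [div_mul_eq_mul_div, mul_div_assoc, mul_rpow hε.le (by positivity)] at upper
  linarith

/-- Blow-up / upper bound of the lifespan in the case `-1 ≤ a < 0`:
for small `ε` and `T > C ε^{-(p-1)/(1-a)}`, the integral equation
`u = ε u⁰ + L(|u|^p (1+y²)^{-(1+a)/2})` has no continuous solution on `ℝ × [0,T]`. -/
theorem stmt_0 (p a : ℝ) (hp : 1 < p) (ha1 : -1 ≤ a) (ha2 : a < 0)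
    (g : ℝ → ℝ) (hg : ContDiff ℝ 1 g) (hgpos : ∀ x, 0 ≤ g x)
    (hgne : ∃ x, g x ≠ 0) (hgint : 0 < ∫ y in (-1:ℝ)..1, g y) :
    ∃ ε₀ > (0:ℝ), ∃ C > (0:ℝ), ∀ ε : ℝ, 0 < ε → ε ≤ ε₀ →
      ∀ T : ℝ, C * ε ^ (-(p - 1) / (1 - a)) < T →
        ¬ ∃ u : ℝ → ℝ → ℝ,
            ContinuousOn (fun q : ℝ × ℝ => u q.1 q.2) (Set.univ ×ˢ Set.Icc 0 T) ∧
            ∀ x t : ℝ, t ∈ Set.Icc (0:ℝ) T →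
              u x t = ε / 2 * (∫ y in (x - t)..(x + t), g y)
                + 1 / 2 * ∫ s in (0:ℝ)..t, ∫ y in (x - t + s)..(x + t - s),
                    |u y s| ^ p / (1 + y ^ 2) ^ ((1 + a) / 2) := by
  exact ⟨1, one_pos, stmt_0_general hp (ha2.trans one_pos) hg.continuous.locallyIntegrable
    hgpos hgint⟩
end

section
/- Let p > 1 and −1 ≤ a < 0, and let F(u) = |u|^{p−1}u or F(u) = |u|^p. Let f ∈ C²(ℝ) with ‖f‖_{L∞(ℝ)} < ∞ and g ∈ C¹(ℝ) with ‖g‖_{L¹(ℝ)} < ∞. Then there exists a positive constant c = c(f,g,a,p) such that for every ε > 0 and every T with 0 < T ≤ c·ε^{−(p−1)/(1−a)}, there exists a bounded continuous function u on ℝ×[0,T] satisfying the integral equation u(x,t) = ε·u⁰(x,t) + (1/2)∬_{D(x,t)} F(u(y,s))·(1+y²)^{−(1+a)/2} dy ds for all (x,t) ∈ ℝ×[0,T]. In particular the lifespan satisfies T_ε ≥ c·ε^{−(p−1)/(1−a)}. -/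
open MeasureTheory Real Set Filter

/-!
The weight is at most `|y|^{-(1+a)}`, so its integral over an interval of length at most `2T` is
`O(T^{-a})`, wherever the interval lies. Hence the Duhamel operator has norm `O(T^{1-a})` on bounded
continuous functions on `ℝ × [0,T]`. The free solution `ε u⁰` has sup norm `O(ε)`, and on the ball
of twice that radius `F` is Lipschitz with constant `O(ε^{p-1})`. The Picard map
`u ↦ ε u⁰ + L(F(u))` is therefore a contraction with constant `1/2` as soon as `ε^{p-1} T^{1-a}` is
small, which is the stated lifespan.
-/

open scoped Interval NNReal Topology BoundedContinuousFunction

section PowerNonlinearity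

lemma hasDerivAt_abs_rpow_sub_one_mul_self {p : ℝ} (hp : 1 < p) (x : ℝ) :
    HasDerivAt (fun s : ℝ ↦ |s| ^ (p - 1) * s) (p * |x| ^ (p - 1)) x := by
  have hp' : 0 < p - 1 := sub_pos.2 hp
  rcases eq_or_ne x 0 with rfl | hx
  · have hlim : Tendsto (fun s : ℝ ↦ |s| ^ (p - 1)) (𝓝[≠] 0) (𝓝 0) := by
      have hcont : Continuous fun s : ℝ ↦ |s| ^ (p - 1) :=
        continuous_abs.rpow_const fun _ ↦ Or.inr hp'.le
      simpa [zero_rpow hp'.ne'] using (hcont.tendsto 0).mono_left nhdsWithin_le_nhds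
    rw [abs_zero, zero_rpow hp'.ne', mul_zero, hasDerivAt_iff_tendsto_slope]
    refine hlim.congr' ?_
    filter_upwards [self_mem_nhdsWithin] with s (hs : s ≠ 0)
    simp [slope_def_field, hs]
  · have hx' : |x| ≠ 0 := abs_ne_zero.2 hx
    refine (((hasDerivAt_abs hx).rpow_const (p := p - 1) (Or.inl hx')).mul
      (hasDerivAt_id x)).congr_deriv ?_
    rw [id_eq, rpow_sub_one hx' (p - 1), mul_one]
    have := sign_mul_self x
    field_simp
    linear_combination (p - 1) * this

lemma lipschitzOnWith_abs_rpow_sub_one_mul_self {p : ℝ≥0} (hp : 1 < p) (R : ℝ≥0) :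
    LipschitzOnWith (p * R ^ ((p : ℝ) - 1)) (fun s : ℝ ↦ |s| ^ ((p : ℝ) - 1) * s)
      (Metric.closedBall 0 R) := by
  have hp' : (1 : ℝ) < p := mod_cast hp
  refine (convex_closedBall 0 (R : ℝ)).lipschitzOnWith_of_nnnorm_hasDerivWithin_le
    (fun x _ ↦ (hasDerivAt_abs_rpow_sub_one_mul_self hp' x).hasDerivWithinAt) fun x hx ↦ ?_
  rw [mem_closedBall_zero_iff, norm_eq_abs] at hx
  rw [← NNReal.coe_le_coe, coe_nnnorm, norm_of_nonneg (by positivity)]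
  push_cast
  gcongr

lemma lipschitzOnWith_abs_rpow {p : ℝ≥0} (hp : 1 < p) (R : ℝ≥0) :
    LipschitzOnWith (p * R ^ ((p : ℝ) - 1)) (fun s : ℝ ↦ |s| ^ (p : ℝ))
      (Metric.closedBall 0 R) := by
  have hp' : (p : ℝ) - 1 + 1 ≠ 0 := by
    simpa using (zero_lt_one.trans hp).ne'
  have habs (s : ℝ) : |s| ^ (p : ℝ) = ‖|s| ^ ((p : ℝ) - 1) * s‖ := by
    rw [norm_mul, norm_of_nonneg (by positivity), norm_eq_abs,
      ← rpow_add_one' (abs_nonneg s) hp', sub_add_cancel]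
  rw [funext habs, ← one_mul (p * _)]
  exact lipschitzWith_one_norm.comp_lipschitzOnWith (lipschitzOnWith_abs_rpow_sub_one_mul_self hp R)

end PowerNonlinearity

section Weight

/-- The weight `(1 + y²)^{-(1+a)/2}` that multiplies the nonlinearity `F(u)`. -/
noncomputable def waveWeight (a y : ℝ) : ℝ := (1 + y ^ 2) ^ (-((1 + a) / 2))

lemma waveWeight_nonneg (a y : ℝ) : 0 ≤ waveWeight a y := by
  unfold waveWeight; positivity

lemma mul_waveWeight (a b y : ℝ) : b * waveWeight a y = b / (1 + y ^ 2) ^ ((1 + a) / 2) := by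
  rw [waveWeight, rpow_neg (by positivity), ← div_eq_mul_inv]

lemma waveWeight_neg (a y : ℝ) : waveWeight a (-y) = waveWeight a y := by
  simp [waveWeight]

lemma continuous_waveWeight (a : ℝ) : Continuous (waveWeight a) :=
  Continuous.rpow_const (by fun_prop) fun y ↦ Or.inl (by positivity)

lemma waveWeight_le_rpow {a r y : ℝ} (ha : -1 ≤ a) (hr : 0 < r) (hy : r ≤ |y|) :
    waveWeight a y ≤ r ^ (-a - 1) := by
  have hsq : r ^ 2 ≤ 1 + y ^ 2 := by
    rw [← sq_abs y]; nlinarith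
  calc waveWeight a y ≤ (r ^ 2) ^ (-((1 + a) / 2)) :=
        rpow_le_rpow_of_nonpos (by positivity) hsq (by linarith)
    _ = r ^ (-a - 1) := by
        rw [← rpow_natCast, ← rpow_mul hr.le]
        congr 1; push_cast; ring

variable {a α β : ℝ}

lemma integral_waveWeight_le_of_nonneg (ha : -1 ≤ a) (ha' : a < 0) (hα : 0 ≤ α) (hαβ : α ≤ β) :
    ∫ y in α..β, waveWeight a y ≤ (β - α) ^ (-a) / (-a) := by
  have hexp : -1 < -a - 1 := by linarith
  calc ∫ y in α..β, waveWeight a y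
      ≤ ∫ y in α..β, (y - α) ^ (-a - 1) := by
        refine intervalIntegral.integral_mono_on_of_le_Ioo hαβ
          ((continuous_waveWeight a).intervalIntegrable _ _) ?_ fun y hy ↦
            waveWeight_le_rpow ha (sub_pos.2 hy.1) ?_
        · simpa using (intervalIntegral.intervalIntegrable_rpow' (a := 0) (b := β - α)
            hexp).comp_sub_right α
        · linarith [le_abs_self y]
    _ = (β - α) ^ (-a) / (-a) := by
        rw [intervalIntegral.integral_comp_sub_right (fun y ↦ y ^ (-a - 1)),
          integral_rpow (Or.inl hexp)]
        simp [zero_rpow (neg_pos.2 ha').ne']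

lemma integral_waveWeight_le_of_nonpos (ha : -1 ≤ a) (ha' : a < 0) (hαβ : α ≤ β) (hβ : β ≤ 0) :
    ∫ y in α..β, waveWeight a y ≤ (β - α) ^ (-a) / (-a) := by
  have h := integral_waveWeight_le_of_nonneg ha ha' (neg_nonneg.2 hβ) (neg_le_neg hαβ)
  rw [← intervalIntegral.integral_comp_neg] at h
  simpa only [waveWeight_neg, neg_sub_neg] using h

lemma integral_waveWeight_le (ha : -1 ≤ a) (ha' : a < 0) (hαβ : α ≤ β) :
    ∫ y in α..β, waveWeight a y ≤ 2 / (-a) * (β - α) ^ (-a) := by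
  have hna : 0 < -a := neg_pos.2 ha'
  have hint (r s : ℝ) : IntervalIntegrable (waveWeight a) volume r s :=
    (continuous_waveWeight a).intervalIntegrable r s
  have hhalf : (β - α) ^ (-a) / (-a) ≤ 2 / (-a) * (β - α) ^ (-a) := by
    rw [div_mul_eq_mul_div]
    gcongr
    linarith [rpow_nonneg (sub_nonneg.2 hαβ) (-a)]
  rcases le_total 0 α with hα | hα
  · exact (integral_waveWeight_le_of_nonneg ha ha' hα hαβ).trans hhalf
  rcases le_total β 0 with hβ | hβ
  · exact (integral_waveWeight_le_of_nonpos ha ha' hαβ hβ).trans hhalf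
  calc ∫ y in α..β, waveWeight a y
      = (∫ y in α..0, waveWeight a y) + ∫ y in 0..β, waveWeight a y :=
        (intervalIntegral.integral_add_adjacent_intervals (hint α 0) (hint 0 β)).symm
    _ ≤ (0 - α) ^ (-a) / (-a) + (β - 0) ^ (-a) / (-a) :=
        add_le_add (integral_waveWeight_le_of_nonpos ha ha' hα le_rfl)
          (integral_waveWeight_le_of_nonneg ha ha' le_rfl hβ)
    _ ≤ (β - α) ^ (-a) / (-a) + (β - α) ^ (-a) / (-a) := by gcongr
    _ = 2 / (-a) * (β - α) ^ (-a) := by ring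

end Weight

section Duhamel

lemma continuous_intervalIntegral_of_continuous_endpoints {X E : Type*} [TopologicalSpace X]
    [NormedAddCommGroup E] [NormedSpace ℝ E] {μ : Measure ℝ} [IsLocallyFiniteMeasure μ]
    [NullSingletonClass μ] {φ : X → ℝ → E} (hφ : Continuous φ.uncurry) {l r : X → ℝ}
    (hl : Continuous l) (hr : Continuous r) :
    Continuous fun x ↦ ∫ y in l x..r x, φ x y ∂μ := by
  have hint (x : X) (s t : ℝ) : IntervalIntegrable (φ x) μ s t :=
    (hφ.uncurry_left x).intervalIntegrable s t
  have hsub (x : X) : ∫ y in l x..r x, φ x y ∂μ =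
      (∫ y in 0..r x, φ x y ∂μ) - ∫ y in 0..l x, φ x y ∂μ :=
    (intervalIntegral.integral_interval_sub_left (hint x 0 (r x)) (hint x 0 (l x))).symm
  simp only [hsub]
  fun_prop

/-- The Duhamel term `(1/2) ∬_{D(x,t)} h w dy ds` at `q = (x, t)`: for `t ≥ 0`, the solution of
`u_tt - u_xx = h(x, t) w(x)` with zero initial data. The weight `w` is kept apart from the source
`h` because only its integrals enter the estimates. -/
noncomputable def duhamel (w : ℝ → ℝ) (h : ℝ × ℝ → ℝ) (q : ℝ × ℝ) : ℝ :=
  1 / 2 * ∫ s in (0 : ℝ)..q.2, ∫ y in (q.1 - q.2 + s)..(q.1 + q.2 - s), h (y, s) * w y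

variable {w : ℝ → ℝ} {h k : ℝ × ℝ → ℝ}

lemma continuous_duhamel_inner (hw : Continuous w) (hh : Continuous h) :
    Continuous fun z : (ℝ × ℝ) × ℝ ↦
      ∫ y in (z.1.1 - z.1.2 + z.2)..(z.1.1 + z.1.2 - z.2), h (y, z.2) * w y :=
  continuous_intervalIntegral_of_continuous_endpoints
    (by simp only [Function.uncurry_def]; fun_prop) (by fun_prop) (by fun_prop)

lemma continuous_duhamel (hw : Continuous w) (hh : Continuous h) : Continuous (duhamel w h) :=
  continuous_const.mul <| continuous_intervalIntegral_of_continuous_endpoints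
    (continuous_duhamel_inner hw hh) continuous_const continuous_snd

lemma duhamel_add (hw : Continuous w) (hh : Continuous h) (hk : Continuous k) :
    duhamel w (h + k) = duhamel w h + duhamel w k := by
  ext ⟨x, t⟩
  have hinner {h : ℝ × ℝ → ℝ} (hh : Continuous h) :
      IntervalIntegrable (fun s ↦ ∫ y in (x - t + s)..(x + t - s), h (y, s) * w y) volume 0 t :=
    ((continuous_duhamel_inner hw hh).comp
      (by fun_prop : Continuous fun s ↦ ((x, t), s))).intervalIntegrable _ _
  have hslice {h : ℝ × ℝ → ℝ} (hh : Continuous h) (s b c : ℝ) :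
      IntervalIntegrable (fun y ↦ h (y, s) * w y) volume b c :=
    Continuous.intervalIntegrable (by fun_prop) _ _
  simp only [duhamel, Pi.add_apply, add_mul]
  simp_rw [fun s ↦ intervalIntegral.integral_add (hslice hh s (x - t + s) (x + t - s))
    (hslice hk s (x - t + s) (x + t - s))]
  rw [intervalIntegral.integral_add (hinner hh) (hinner hk), mul_add]

lemma duhamel_smul (w : ℝ → ℝ) (c : ℝ) (h : ℝ × ℝ → ℝ) :
    duhamel w (c • h) = c • duhamel w h := by
  ext q
  simp only [duhamel, Pi.smul_apply, smul_eq_mul, mul_assoc, intervalIntegral.integral_const_mul]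
  ring

variable {T W : ℝ}

lemma abs_duhamel_le (hw : Continuous w) (hw0 : ∀ y, 0 ≤ w y)
    (hW : ∀ α β, α ≤ β → β - α ≤ 2 * T → ∫ y in α..β, w y ≤ W) {d : ℝ} (hd : ∀ q, |h q| ≤ d)
    {q : ℝ × ℝ} (hq : q.2 ∈ Icc 0 T) : |duhamel w h q| ≤ W * T / 2 * d := by
  obtain ⟨x, t⟩ := q
  obtain ⟨ht0 : 0 ≤ t, htT : t ≤ T⟩ := hq
  have hd0 : 0 ≤ d := (abs_nonneg _).trans (hd 0)
  have hW0 : 0 ≤ W := by simpa using hW 0 0 le_rfl (by linarith)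
  have hinner (s : ℝ) (hs : s ∈ Ι 0 t) :
      ‖∫ y in (x - t + s)..(x + t - s), h (y, s) * w y‖ ≤ d * W := by
    rw [uIoc_of_le ht0] at hs
    have hle : x - t + s ≤ x + t - s := by linarith [hs.2]
    calc ‖∫ y in (x - t + s)..(x + t - s), h (y, s) * w y‖
        ≤ ∫ y in (x - t + s)..(x + t - s), d * w y := by
          refine intervalIntegral.norm_integral_le_of_norm_le hle (.of_forall fun y _ ↦ ?_)
            ((hw.const_mul d).intervalIntegrable _ _)
          rw [norm_mul, norm_of_nonneg (hw0 y)]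
          exact mul_le_mul_of_nonneg_right (hd (y, s)) (hw0 y)
      _ = d * ∫ y in (x - t + s)..(x + t - s), w y := intervalIntegral.integral_const_mul _ _
      _ ≤ d * W := by gcongr; exact hW _ _ hle (by linarith [hs.1])
  have houter := intervalIntegral.norm_integral_le_of_norm_le_const hinner
  rw [sub_zero, norm_eq_abs, abs_of_nonneg ht0] at houter
  calc |duhamel w h (x, t)| ≤ 1 / 2 * (d * W * t) := by
        rw [duhamel, abs_mul, abs_of_pos one_half_pos]; gcongr
    _ ≤ 1 / 2 * (d * W * T) := by gcongr
    _ = W * T / 2 * d := by ring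

-- Clamping the time to `[0, T]` turns `duhamel w` into a bounded operator on functions on `ℝ × ℝ`.
lemma exists_continuousLinearMap_eq_duhamel (hT : 0 ≤ T) (hw : Continuous w) (hw0 : ∀ y, 0 ≤ w y)
    (hW : ∀ α β, α ≤ β → β - α ≤ 2 * T → ∫ y in α..β, w y ≤ W) :
    ∃ L : (ℝ × ℝ →ᵇ ℝ) →L[ℝ] (ℝ × ℝ →ᵇ ℝ), ‖L‖ ≤ W * T / 2 ∧
      ∀ h q, q.2 ∈ Icc 0 T → L h q = duhamel w h q := by
  have hW0 : 0 ≤ W := by simpa using hW 0 0 le_rfl (by linarith)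
  let clamp (q : ℝ × ℝ) : ℝ × ℝ := (q.1, projIcc 0 T hT q.2)
  have hclamp : Continuous clamp :=
    continuous_fst.prodMk (continuous_subtype_val.comp (continuous_projIcc.comp continuous_snd))
  have hbound (h : ℝ × ℝ →ᵇ ℝ) (q : ℝ × ℝ) : ‖duhamel w h (clamp q)‖ ≤ W * T / 2 * ‖h‖ :=
    abs_duhamel_le hw hw0 hW h.norm_coe_le_norm (projIcc 0 T hT q.2).2
  let L : (ℝ × ℝ →ᵇ ℝ) →ₗ[ℝ] (ℝ × ℝ →ᵇ ℝ) :=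
    { toFun h := .ofNormedAddCommGroup (duhamel w h ∘ clamp)
        ((continuous_duhamel hw h.continuous).comp hclamp) _ (hbound h)
      map_add' h k := by
        ext q
        exact congrFun (duhamel_add hw h.continuous k.continuous) (clamp q)
      map_smul' c h := by
        ext q
        exact congrFun (duhamel_smul w c h) (clamp q) }
  refine ⟨L.mkContinuous (W * T / 2) fun h ↦ ?_, L.mkContinuous_norm_le (by positivity) _, ?_⟩
  · exact BoundedContinuousFunction.norm_ofNormedAddCommGroup_le _ (by positivity) (hbound h)
  · rintro h ⟨x, t⟩ ht
    change duhamel w h (x, projIcc 0 T hT t) = duhamel w h (x, t)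
    rw [projIcc_of_mem hT ht]

end Duhamel

section Picard

lemma exists_eq_add_of_lipschitzWith {E : Type*} [NormedAddCommGroup E] [CompleteSpace E]
    {N : E → E} {κ : ℝ≥0} (hκ : κ < 1) (hN : LipschitzWith κ N) (hN0 : N 0 = 0) (v : E) :
    ∃ u, u = v + N u ∧ ‖u‖ ≤ ‖v‖ / (1 - κ) := by
  have hΦ : ContractingWith κ fun u ↦ v + N u :=
    ⟨hκ, .of_dist_le_mul fun x y ↦ by simpa using hN.dist_le_mul x y⟩
  refine ⟨hΦ.fixedPoint, hΦ.fixedPoint_isFixedPt.symm, ?_⟩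
  simpa [hN0] using hΦ.dist_fixedPoint_le 0

-- Banach's theorem is applied to a global Lipschitz extension `G` of `F`; the a priori bound
-- `‖u‖ ≤ 2 ‖v‖` of the fixed point then shows that `u` only takes values where `G = F`.
lemma exists_eq_add_duhamel {w F : ℝ → ℝ} {T W : ℝ} {K : ℝ≥0} (hT : 0 ≤ T) (hw : Continuous w)
    (hw0 : ∀ y, 0 ≤ w y) (hW : ∀ α β, α ≤ β → β - α ≤ 2 * T → ∫ y in α..β, w y ≤ W)
    (hF0 : F 0 = 0) {v : ℝ × ℝ →ᵇ ℝ} (hF : LipschitzOnWith K F (Metric.closedBall 0 (2 * ‖v‖)))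
    (hsmall : K * (W * T) ≤ 1) :
    ∃ u : ℝ × ℝ →ᵇ ℝ, ∀ q, q.2 ∈ Icc 0 T → u q = v q + duhamel w (F ∘ u) q := by
  obtain ⟨L, hL, hLduhamel⟩ := exists_continuousLinearMap_eq_duhamel hT hw hw0 hW
  obtain ⟨G, hG, hFG⟩ := hF.extend_real
  have hG0 : G 0 = 0 := by rw [← hFG (by simp), hF0]
  let N (u : ℝ × ℝ →ᵇ ℝ) : ℝ × ℝ →ᵇ ℝ := L (u.comp G hG)
  have hN0 : N 0 = 0 := by
    have : (0 : ℝ × ℝ →ᵇ ℝ).comp G hG = 0 := by ext; simp [hG0]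
    simp [N, this]
  have hN : LipschitzWith (1 / 2) N := by
    refine (L.lipschitz.comp (BoundedContinuousFunction.lipschitz_comp hG)).weaken ?_
    rw [← NNReal.coe_le_coe]
    push_cast
    calc ‖L‖ * K ≤ W * T / 2 * K := by gcongr
      _ ≤ 1 / 2 := by linarith
  obtain ⟨u, hu, hunorm⟩ := exists_eq_add_of_lipschitzWith (by norm_num) hN hN0 v
  have huball (q : ℝ × ℝ) : u q ∈ Metric.closedBall 0 (2 * ‖v‖) := by
    rw [mem_closedBall_zero_iff]
    refine (u.norm_coe_le_norm q).trans (hunorm.trans_eq ?_)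
    norm_num [div_eq_mul_inv, mul_comm]
  refine ⟨u, fun q hq ↦ ?_⟩
  calc u q = v q + L (u.comp G hG) q := congrArg (· q) hu
    _ = v q + duhamel w (G ∘ u) q := by rw [hLduhamel _ _ hq]; rfl
    _ = v q + duhamel w (F ∘ u) q := by
        rw [show F ∘ u = G ∘ u from funext fun q ↦ hFG (huball q)]

end Picard

section DAlembert

/-- d'Alembert's solution `u⁰(x, t)`, at `q = (x, t)`, of the free wave equation with initial
position `f` and initial velocity `g`. -/
noncomputable def dAlembert (f g : ℝ → ℝ) (q : ℝ × ℝ) : ℝ :=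
  (f (q.1 + q.2) + f (q.1 - q.2)) / 2 + 1 / 2 * ∫ y in (q.1 - q.2)..(q.1 + q.2), g y

variable {f g : ℝ → ℝ}

lemma continuous_dAlembert (hf : Continuous f) (hg : Integrable g) :
    Continuous (dAlembert f g) := by
  have hprim : Continuous fun x ↦ ∫ y in (0 : ℝ)..x, g y :=
    intervalIntegral.continuous_primitive (fun _ _ ↦ hg.intervalIntegrable) 0
  have hsub (q : ℝ × ℝ) : ∫ y in (q.1 - q.2)..(q.1 + q.2), g y =
      (∫ y in 0..(q.1 + q.2), g y) - ∫ y in 0..(q.1 - q.2), g y :=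
    (intervalIntegral.integral_interval_sub_left hg.intervalIntegrable hg.intervalIntegrable).symm
  unfold dAlembert
  simp only [hsub]
  fun_prop

lemma norm_dAlembert_le {A : ℝ} (hf : ∀ x, |f x| ≤ A) (hg : Integrable g) (q : ℝ × ℝ) :
    ‖dAlembert f g q‖ ≤ A + 1 / 2 * ∫ y, |g y| := by
  have hint : |∫ y in (q.1 - q.2)..(q.1 + q.2), g y| ≤ ∫ y, |g y| :=
    intervalIntegral.norm_integral_le_integral_norm_uIoc.trans
      (setIntegral_le_integral hg.norm (.of_forall fun y ↦ norm_nonneg (g y)))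
  have hplus := abs_le.1 (hf (q.1 + q.2))
  have hminus := abs_le.1 (hf (q.1 - q.2))
  rw [abs_le] at hint
  rw [dAlembert, norm_eq_abs, abs_le]
  constructor <;> linarith

end DAlembert

section Lifespan

lemma exists_pos_forall_mul_rpow_mul_rpow_le_one {D r : ℝ} (hD : 0 ≤ D) (hr : 0 < r) (q : ℝ) :
    ∃ c > 0, ∀ ε : ℝ, 0 < ε → ∀ T : ℝ, 0 < T → T ≤ c * ε ^ (-q / r) → D * ε ^ q * T ^ r ≤ 1 := by
  refine ⟨(D + 1) ^ (-1 / r), by positivity, fun ε hε T hT hTle ↦ ?_⟩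
  calc D * ε ^ q * T ^ r
      ≤ (D + 1) * ε ^ q * ((D + 1) ^ (-1 / r) * ε ^ (-q / r)) ^ r := by gcongr; linarith
    _ = (D + 1) * ε ^ q * ((D + 1)⁻¹ * (ε ^ q)⁻¹) := by
        rw [mul_rpow (by positivity) (by positivity), ← rpow_mul (by positivity),
          ← rpow_mul hε.le, div_mul_cancel₀ _ hr.ne', div_mul_cancel₀ _ hr.ne', rpow_neg_one,
          rpow_neg hε.le]
    _ = 1 := by field_simp

lemma exists_eq_smul_add_duhamel_waveWeight {p a : ℝ} (ha : -1 ≤ a) (ha' : a < 0) {F : ℝ → ℝ}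
    {K : ℝ≥0} (hF0 : F 0 = 0)
    (hF : ∀ R : ℝ≥0, LipschitzOnWith (K * R ^ (p - 1)) F (Metric.closedBall 0 R))
    {V : ℝ × ℝ →ᵇ ℝ} {ε T : ℝ} (hε : 0 < ε) (hT : 0 < T)
    (hsmall : K * (2 * ‖V‖) ^ (p - 1) * (2 ^ (1 - a) / (-a)) * ε ^ (p - 1) * T ^ (1 - a) ≤ 1) :
    ∃ u : ℝ × ℝ →ᵇ ℝ, ∀ q, q.2 ∈ Icc 0 T →
      u q = (ε • V) q + duhamel (waveWeight a) (F ∘ u) q := by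
  have hna : 0 < -a := neg_pos.2 ha'
  have hW (α β : ℝ) (hαβ : α ≤ β) (hβ : β - α ≤ 2 * T) :
      ∫ y in α..β, waveWeight a y ≤ 2 / (-a) * (2 * T) ^ (-a) :=
    (integral_waveWeight_le ha ha' hαβ).trans (by gcongr)
  have hball : LipschitzOnWith (K * (2 * ‖ε • V‖₊) ^ (p - 1)) F
      (Metric.closedBall 0 (2 * ‖ε • V‖)) := by
    simpa using hF (2 * ‖ε • V‖₊)
  refine exists_eq_add_duhamel hT.le (continuous_waveWeight a) (waveWeight_nonneg a) hW hF0 hball ?_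
  push_cast
  rw [norm_smul, norm_of_nonneg hε.le]
  calc K * (2 * (ε * ‖V‖)) ^ (p - 1) * (2 / (-a) * (2 * T) ^ (-a) * T)
      = K * (2 * ‖V‖) ^ (p - 1) * (2 ^ (1 - a) / (-a)) * ε ^ (p - 1) * T ^ (1 - a) := by
        rw [mul_left_comm 2 ε, mul_rpow hε.le (by positivity), mul_rpow zero_le_two hT.le,
          sub_eq_add_neg 1 a, rpow_add hT, rpow_add two_pos, rpow_one, rpow_one]
        ring
    _ ≤ 1 := hsmall

theorem stmt_3_general {p a : ℝ} (ha1 : -1 ≤ a) (ha2 : a < 0) {F : ℝ → ℝ} {K : ℝ≥0}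
    (hF0 : F 0 = 0)
    (hF : ∀ R : ℝ≥0, LipschitzOnWith (K * R ^ (p - 1)) F (Metric.closedBall 0 R))
    {f g : ℝ → ℝ} (hf : Continuous f) (hfb : BddAbove (Set.range fun x => |f x|))
    (hgi : Integrable g) :
    ∃ c > (0:ℝ), ∀ ε : ℝ, 0 < ε →
      ∀ T : ℝ, 0 < T → T ≤ c * ε ^ (-(p - 1) / (1 - a)) →
        ∃ u : ℝ → ℝ → ℝ,
          ContinuousOn (fun q : ℝ × ℝ => u q.1 q.2) (Set.univ ×ˢ Set.Icc 0 T) ∧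
          (∃ B : ℝ, ∀ x t : ℝ, t ∈ Set.Icc (0:ℝ) T → |u x t| ≤ B) ∧
          ∀ x t : ℝ, t ∈ Set.Icc (0:ℝ) T →
            u x t = ε * ((f (x + t) + f (x - t)) / 2 + 1 / 2 * ∫ y in (x - t)..(x + t), g y)
              + 1 / 2 * ∫ s in (0:ℝ)..t, ∫ y in (x - t + s)..(x + t - s),
                  F (u y s) / (1 + y ^ 2) ^ ((1 + a) / 2) := by
  have hna : 0 < -a := neg_pos.2 ha2
  obtain ⟨A, hA⟩ := hfb
  let V : ℝ × ℝ →ᵇ ℝ := .ofNormedAddCommGroup (dAlembert f g) (continuous_dAlembert hf hgi) _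
    (norm_dAlembert_le (fun x ↦ hA ⟨x, rfl⟩) hgi)
  obtain ⟨c, hc, hsmall⟩ := exists_pos_forall_mul_rpow_mul_rpow_le_one
    (D := K * (2 * ‖V‖) ^ (p - 1) * (2 ^ (1 - a) / (-a))) (r := 1 - a)
    (by positivity) (by linarith) (p - 1)
  refine ⟨c, hc, fun ε hε T hT hTc ↦ ?_⟩
  obtain ⟨u, hu⟩ :=
    exists_eq_smul_add_duhamel_waveWeight ha1 ha2 hF0 hF hε hT (hsmall ε hε T hT hTc)
  refine ⟨fun x t ↦ u (x, t), u.continuous.continuousOn,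
    ⟨‖u‖, fun x t _ ↦ u.norm_coe_le_norm (x, t)⟩, fun x t ht ↦ (hu (x, t) ht).trans ?_⟩
  simp only [duhamel, Function.comp_apply, mul_waveWeight]
  rfl

end Lifespan

/-- Lower bound of the lifespan in the case `-1 ≤ a < 0`: there is `c > 0` such that for all
`ε > 0` and `0 < T ≤ c ε^{-(p-1)/(1-a)}`, the integral equation
`u = ε u⁰ + L(F(u) (1+y²)^{-(1+a)/2})`, with `F(u) = |u|^{p-1}u` or `|u|^p`,
has a bounded continuous solution on `ℝ × [0,T]`. -/
theorem stmt_3 (p a : ℝ) (hp : 1 < p) (ha1 : -1 ≤ a) (ha2 : a < 0)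
    (F : ℝ → ℝ) (hF : (∀ s : ℝ, F s = |s| ^ (p - 1) * s) ∨ (∀ s : ℝ, F s = |s| ^ p))
    (f g : ℝ → ℝ) (hf : ContDiff ℝ 2 f) (hfb : BddAbove (Set.range fun x => |f x|))
    (hg : ContDiff ℝ 1 g) (hgi : Integrable g) :
    ∃ c > (0:ℝ), ∀ ε : ℝ, 0 < ε →
      ∀ T : ℝ, 0 < T → T ≤ c * ε ^ (-(p - 1) / (1 - a)) →
        ∃ u : ℝ → ℝ → ℝ,
          ContinuousOn (fun q : ℝ × ℝ => u q.1 q.2) (Set.univ ×ˢ Set.Icc 0 T) ∧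
          (∃ B : ℝ, ∀ x t : ℝ, t ∈ Set.Icc (0:ℝ) T → |u x t| ≤ B) ∧
          ∀ x t : ℝ, t ∈ Set.Icc (0:ℝ) T →
            u x t = ε * ((f (x + t) + f (x - t)) / 2 + 1 / 2 * ∫ y in (x - t)..(x + t), g y)
              + 1 / 2 * ∫ s in (0:ℝ)..t, ∫ y in (x - t + s)..(x + t - s),
                  F (u y s) / (1 + y ^ 2) ^ ((1 + a) / 2) := by
  lift p to ℝ≥0 using by linarith
  replace hp : 1 < p := mod_cast hp
  rcases hF with hF | hF <;> obtain rfl := funext hF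
  · exact stmt_3_general ha1 ha2 (by simp) (lipschitzOnWith_abs_rpow_sub_one_mul_self hp)
      hf.continuous hfb hgi
  · exact stmt_3_general ha1 ha2 (by simp [(zero_lt_one.trans hp).ne'])
      (lipschitzOnWith_abs_rpow hp) hf.continuous hfb hgi
end

section
/- Let p > 1, a ≥ −1, ε > 0, T > 0. Let g ∈ C¹(ℝ) satisfy g ≥ 0 on ℝ and ∫_{−1}^{1} g(y) dy > 0, and set c₀ = (1/2)∫_{−1}^{1} g(y) dy > 0. Suppose u ∈ C(ℝ×[0,T]) satisfies u(x,t) = (ε/2)∫_{x−t}^{x+t} g(y) dy + (1/2)∬_{D(x,t)} |u(y,s)|^p (1+y²)^{−(1+a)/2} dy ds for all (x,t) ∈ ℝ×[0,T]. Then u(x,t) ≥ ε·c₀ for all (x,t) ∈ Γ₁ = {(x,t) ∈ [0,∞)×[0,T] : t − x ≥ 1}. -/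
open MeasureTheory Real Set

lemma integral_backward_triangle_nonneg {F : ℝ → ℝ → ℝ} {x t : ℝ} (ht : 0 ≤ t)
    (hF : ∀ s ∈ Icc 0 t, ∀ y ∈ Icc (x - t + s) (x + t - s), 0 ≤ F y s) :
    0 ≤ ∫ s in 0..t, ∫ y in (x - t + s)..(x + t - s), F y s :=
  intervalIntegral.integral_nonneg ht fun s hs =>
    intervalIntegral.integral_nonneg (by linarith [hs.2]) (hF s hs)

lemma mul_half_integral_le_dAlembert_add_duhamel {g : ℝ → ℝ} {F : ℝ → ℝ → ℝ} {ε x t α β : ℝ}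
    (hε : 0 ≤ ε) (hg : IntervalIntegrable g volume (x - t) (x + t))
    (hg_nonneg : 0 ≤ᵐ[volume.restrict (Ioc (x - t) (x + t))] g)
    (hF : ∀ s ∈ Icc 0 t, ∀ y ∈ Icc (x - t + s) (x + t - s), 0 ≤ F y s)
    (hα : x - t ≤ α) (hαβ : α ≤ β) (hβ : β ≤ x + t) :
    ε * (1 / 2 * ∫ y in α..β, g y) ≤
      ε / 2 * (∫ y in (x - t)..(x + t), g y)
        + 1 / 2 * ∫ s in 0..t, ∫ y in (x - t + s)..(x + t - s), F y s := by
  have hdata : ∫ y in α..β, g y ≤ ∫ y in (x - t)..(x + t), g y :=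
    intervalIntegral.integral_mono_interval hα hαβ hβ hg_nonneg hg
  have hsource := integral_backward_triangle_nonneg (by linarith : 0 ≤ t) hF
  calc ε * (1 / 2 * ∫ y in α..β, g y)
      = ε / 2 * ∫ y in α..β, g y := by ring
    _ ≤ ε / 2 * ∫ y in (x - t)..(x + t), g y := by gcongr
    _ ≤ _ := le_add_of_nonneg_right (mul_nonneg one_half_pos.le hsource)

theorem stmt_7_general {p a ε T : ℝ} (hε : 0 ≤ ε)
    {g : ℝ → ℝ} (hg : LocallyIntegrable g) (hg_nonneg : 0 ≤ᵐ[volume] g)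
    {u : ℝ → ℝ → ℝ}
    (hu : ContinuousOn (fun q : ℝ × ℝ => u q.1 q.2) (univ ×ˢ Icc 0 T))
    (heq : ∀ x t : ℝ, t ∈ Icc 0 T →
      u x t = ε / 2 * (∫ y in (x - t)..(x + t), g y)
        + 1 / 2 * ∫ s in 0..t, ∫ y in (x - t + s)..(x + t - s),
            |u y s| ^ p / (1 + y ^ 2) ^ ((1 + a) / 2))
    {x t α β : ℝ} (ht : t ∈ Icc 0 T) (hα : x - t ≤ α) (hαβ : α ≤ β) (hβ : β ≤ x + t) :
    ε * (1 / 2 * ∫ y in α..β, g y) ≤ u x t := by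
  rw [heq x t ht]
  exact mul_half_integral_le_dAlembert_add_duhamel hε
    (hg.integrableOn_isCompact isCompact_uIcc).intervalIntegrable
    (ae_restrict_of_ae hg_nonneg) (fun s _ y _ => by positivity) hα hαβ hβ

/-- First step of the iteration: any continuous solution of the integral equation
satisfies `u(x,t) ≥ ε c₀` on `Γ₁ = {(x,t) ∈ [0,∞)×[0,T] : t - x ≥ 1}`,
where `c₀ = (1/2)∫_{-1}^1 g`. -/
theorem stmt_7 (p a ε T : ℝ) (hp : 1 < p) (ha : -1 ≤ a) (hε : 0 < ε) (hT : 0 < T)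
    (g : ℝ → ℝ) (hg : ContDiff ℝ 1 g) (hgpos : ∀ x, 0 ≤ g x)
    (hgint : 0 < ∫ y in (-1:ℝ)..1, g y)
    (c₀ : ℝ) (hc₀ : c₀ = 1 / 2 * ∫ y in (-1:ℝ)..1, g y)
    (u : ℝ → ℝ → ℝ)
    (hu : ContinuousOn (fun q : ℝ × ℝ => u q.1 q.2) (Set.univ ×ˢ Set.Icc 0 T))
    (heq : ∀ x t : ℝ, t ∈ Set.Icc (0:ℝ) T →
      u x t = ε / 2 * (∫ y in (x - t)..(x + t), g y)
        + 1 / 2 * ∫ s in (0:ℝ)..t, ∫ y in (x - t + s)..(x + t - s),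
            |u y s| ^ p / (1 + y ^ 2) ^ ((1 + a) / 2)) :
    ∀ x t : ℝ, 0 ≤ x → t ∈ Set.Icc (0:ℝ) T → 1 ≤ t - x → ε * c₀ ≤ u x t := by
  intro x t hx ht htx
  rw [hc₀]
  exact stmt_7_general hε.le hg.continuous.locallyIntegrable (ae_of_all _ hgpos)
    hu heq ht (by linarith) (by norm_num) (by linarith)
end

section
/- Let p > 1, −1 ≤ a < 0, ε > 0, T > 0. Let g ∈ C¹(ℝ) satisfy g ≥ 0 on ℝ and ∫_{−1}^{1} g(y) dy > 0, and set c₀ = (1/2)∫_{−1}^{1} g(y) dy. Suppose u ∈ C(ℝ×[0,T]) satisfies u(x,t) = (ε/2)∫_{x−t}^{x+t} g(y) dy + (1/2)∬_{D(x,t)} |u(y,s)|^p (1+y²)^{−(1+a)/2} dy ds on ℝ×[0,T]. Then for every j ∈ ℕ (j ≥ 1) and every (x,t) ∈ Γ₂ = {(x,t) ∈ [0,∞)×[0,T] : x ≥ t−x ≥ 1}, one has u(x,t) ≥ C_{a,j} · { (t−x)^{−(a+1)} (t−x−1)² }^{a_j}, where a_j = (p^j − 1)/(p−1). -/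
open MeasureTheory Real Set

/-!
With `β = t - x`, the backward triangle `D(x,t)` of a point of `Γ₂` contains the triangle
`1 ≤ y ≤ β`, `y + 1 ≤ s ≤ 2y`, which lies in `Γ₂`. A bound
`u ≥ A {(t-x)^{-(a+1)} (t-x-1)²}^q` on `Γ₂` can therefore be inserted into the integral equation.
On this triangle both `(s-y)^{-(a+1)}` and the weight `(1+y²)^{-(1+a)/2}` are bounded below by
multiples of `β^{-(a+1)}`, and what remains is the elementary integral of `(s-y-1)^{2pq}`. The
result is a bound of the same shape with exponent `pq + 1` and constant at least `A^p E / F^j`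
when `q = a_j`, while the `C_{a,j}` solve `C_{j+1} = C_j^p E / F^j`. The free part of the equation
starts the iteration with exponent `0` and constant `c₀ε`.
-/

section RegionIntegral

/-- The closed region between the graphs of `φ` and `ψ` over `s`; the closed counterpart of
`regionBetween`, used to write iterated integrals as integrals over plane sets. -/
def closedRegionBetween (φ ψ : ℝ → ℝ) (s : Set ℝ) : Set (ℝ × ℝ) :=
  {z | z.1 ∈ s ∧ z.2 ∈ Icc (φ z.1) (ψ z.1)}

theorem measurableSet_closedRegionBetween {φ ψ : ℝ → ℝ} {s : Set ℝ} (hφ : Measurable φ)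
    (hψ : Measurable ψ) (hs : MeasurableSet s) : MeasurableSet (closedRegionBetween φ ψ s) :=
  measurableSet_region_between_cc hφ hψ hs

variable {E : Type*} [NormedAddCommGroup E] [NormedSpace ℝ E] {f : ℝ × ℝ → E}

theorem setIntegral_closedRegionBetween {φ ψ : ℝ → ℝ} {a b : ℝ} (hφ : Measurable φ)
    (hψ : Measurable ψ) (hab : a ≤ b) (hφψ : ∀ x ∈ Icc a b, φ x ≤ ψ x)
    (hf : IntegrableOn f (closedRegionBetween φ ψ (Icc a b))) :
    ∫ z in closedRegionBetween φ ψ (Icc a b), f z = ∫ x in a..b, ∫ y in φ x..ψ x, f (x, y) := by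
  have hmeas := measurableSet_closedRegionBetween hφ hψ (measurableSet_Icc (a := a) (b := b))
  rw [← integral_indicator hmeas, Measure.volume_eq_prod,
    integral_prod _ (hf.integrable_indicator hmeas), intervalIntegral.integral_of_le hab,
    ← integral_Icc_eq_integral_Ioc, ← integral_indicator measurableSet_Icc]
  congr 1 with x
  by_cases hx : x ∈ Icc a b
  · have hsection : (fun y ↦ (closedRegionBetween φ ψ (Icc a b)).indicator f (x, y)) =
        (Icc (φ x) (ψ x)).indicator fun y ↦ f (x, y) := by
      ext y
      simp only [indicator, closedRegionBetween, mem_ofPred_eq, hx, true_and]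
    rw [hsection, integral_indicator measurableSet_Icc, indicator_of_mem hx,
      intervalIntegral.integral_of_le (hφψ x hx), integral_Icc_eq_integral_Ioc]
  · simp only [indicator, closedRegionBetween, mem_ofPred_eq, hx, false_and, if_false,
      integral_zero]

/-- The backward triangle `D(x,t)` of points `(y,s)`, the domain of dependence of `(x,t)`. -/
def dependenceTriangle (x t : ℝ) : Set (ℝ × ℝ) :=
  {z | z.2 ∈ Icc 0 t ∧ z.1 ∈ Icc (x - t + z.2) (x + t - z.2)}

theorem dependenceTriangle_eq_preimage_swap (x t : ℝ) :
    dependenceTriangle x t =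
      Prod.swap ⁻¹' closedRegionBetween (x - t + ·) (x + t - ·) (Icc 0 t) := rfl

theorem measurableSet_dependenceTriangle (x t : ℝ) : MeasurableSet (dependenceTriangle x t) :=
  measurable_swap
    (measurableSet_closedRegionBetween (by fun_prop) (by fun_prop) measurableSet_Icc)

theorem dependenceTriangle_subset (x t : ℝ) :
    dependenceTriangle x t ⊆ Icc (x - t) (x + t) ×ˢ Icc 0 t := by
  rintro ⟨y, s⟩ ⟨⟨hs0, hst⟩, hy⟩
  exact ⟨⟨by linarith [hy.1], by linarith [hy.2]⟩, hs0, hst⟩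

theorem setIntegral_dependenceTriangle {x t : ℝ} (ht : 0 ≤ t)
    (hf : IntegrableOn f (dependenceTriangle x t)) :
    ∫ z in dependenceTriangle x t, f z =
      ∫ s in (0 : ℝ)..t, ∫ y in (x - t + s)..(x + t - s), f (y, s) := by
  have hswap : MeasurePreserving (Prod.swap : ℝ × ℝ → ℝ × ℝ) := Measure.measurePreserving_swap
  have hemb : MeasurableEmbedding (Prod.swap : ℝ × ℝ → ℝ × ℝ) :=
    MeasurableEquiv.prodComm.measurableEmbedding
  rw [dependenceTriangle_eq_preimage_swap] at hf ⊢
  have hf' : IntegrableOn (f ∘ Prod.swap)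
      (closedRegionBetween (x - t + ·) (x + t - ·) (Icc 0 t)) :=
    (hswap.integrableOn_comp_preimage hemb).1 hf
  calc _ = ∫ z in closedRegionBetween (x - t + ·) (x + t - ·) (Icc 0 t), f z.swap :=
        hswap.setIntegral_preimage_emb hemb (fun z ↦ f z.swap) _
    _ = _ := setIntegral_closedRegionBetween (by fun_prop) (by fun_prop) ht
        (fun s hs ↦ by linarith [hs.2]) hf'

end RegionIntegral

section CharacteristicTriangle

/-- The set `Γ₂ = {(x,t) ∈ [0,∞) × [0,T] : x ≥ t - x ≥ 1}` on which the iteration takes place. -/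
def Γ₂ (T : ℝ) : Set (ℝ × ℝ) :=
  {z | 0 ≤ z.1 ∧ z.2 ∈ Icc 0 T ∧ 1 ≤ z.2 - z.1 ∧ z.2 - z.1 ≤ z.1}

/-- The part `y ≤ β` of `{(y,s) : y ≥ s - y ≥ 1}`; over it the source term of the integral
equation is estimated from below. -/
def characteristicTriangle (β : ℝ) : Set (ℝ × ℝ) :=
  closedRegionBetween (· + 1) (2 * ·) (Icc 1 β)

variable {m β : ℝ}

theorem mem_Γ₂ {x t T : ℝ} :
    (x, t) ∈ Γ₂ T ↔ 0 ≤ x ∧ t ∈ Icc 0 T ∧ 1 ≤ t - x ∧ t - x ≤ x := Iff.rfl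

theorem mem_characteristicTriangle {y s : ℝ} :
    (y, s) ∈ characteristicTriangle β ↔ y ∈ Icc 1 β ∧ s ∈ Icc (y + 1) (2 * y) := Iff.rfl

theorem measurableSet_characteristicTriangle (β : ℝ) :
    MeasurableSet (characteristicTriangle β) :=
  measurableSet_closedRegionBetween (by fun_prop) (by fun_prop) measurableSet_Icc

theorem characteristicTriangle_subset_dependenceTriangle {x t : ℝ} (h : t - x ≤ x) :
    characteristicTriangle (t - x) ⊆ dependenceTriangle x t := by
  rintro ⟨y, s⟩ ⟨⟨hy1, hyβ⟩, hs1, hs2⟩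
  exact ⟨⟨by linarith, by linarith⟩, by linarith, by linarith⟩

theorem characteristicTriangle_subset_Γ₂ {x t T : ℝ} (h : (x, t) ∈ Γ₂ T) :
    characteristicTriangle (t - x) ⊆ Γ₂ T := by
  obtain ⟨-, ⟨-, htT⟩, -, hβx⟩ := mem_Γ₂.1 h
  rintro ⟨y, s⟩ hys
  obtain ⟨⟨hy1, hyβ⟩, hs1, hs2⟩ := mem_characteristicTriangle.1 hys
  exact mem_Γ₂.2 ⟨by linarith, ⟨by linarith, by linarith⟩, by linarith, by linarith⟩

theorem continuous_sub_sub_one_rpow (hm : 0 ≤ m) :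
    Continuous fun z : ℝ × ℝ ↦ (z.2 - z.1 - 1) ^ m :=
  Continuous.rpow_const (by fun_prop) fun _ ↦ Or.inr hm

theorem integrableOn_characteristicTriangle (hm : 0 ≤ m) :
    IntegrableOn (fun z ↦ (z.2 - z.1 - 1) ^ m) (characteristicTriangle β) := by
  have hbox : characteristicTriangle β ⊆ Icc 1 β ×ˢ Icc 2 (2 * β) := by
    rintro ⟨y, s⟩ ⟨⟨hy1, hyβ⟩, hs1, hs2⟩
    exact ⟨⟨hy1, hyβ⟩, by linarith, by linarith⟩
  exact ((continuous_sub_sub_one_rpow hm).continuousOn.integrableOn_compact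
    (isCompact_Icc.prod isCompact_Icc)).mono_set hbox

theorem integral_sub_one_rpow {r : ℝ} (hr : 0 ≤ r) (b : ℝ) :
    ∫ y in (1 : ℝ)..b, (y - 1) ^ r = (b - 1) ^ (r + 1) / (r + 1) := by
  rw [intervalIntegral.integral_comp_sub_right (fun z : ℝ ↦ z ^ r),
    integral_rpow (Or.inl (by linarith)), sub_self, zero_rpow (by linarith), sub_zero]

theorem setIntegral_characteristicTriangle (hm : 0 ≤ m) (hβ : 1 ≤ β) :
    ∫ z in characteristicTriangle β, (z.2 - z.1 - 1) ^ m =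
      (β - 1) ^ (m + 2) / ((m + 1) * (m + 2)) := by
  have hinner (y : ℝ) : ∫ s in (y + 1)..(2 * y), (s - y - 1) ^ m = (y - 1) ^ (m + 1) / (m + 1) := by
    rw [intervalIntegral.integral_comp_sub_right (fun z ↦ (z - 1) ^ m) y, add_sub_cancel_left,
      two_mul, add_sub_cancel_right, integral_sub_one_rpow hm]
  calc _ = ∫ y in (1 : ℝ)..β, ∫ s in (y + 1)..(2 * y), (s - y - 1) ^ m :=
        setIntegral_closedRegionBetween (by fun_prop) (by fun_prop) hβ
          (fun y hy ↦ by linarith [hy.1]) (integrableOn_characteristicTriangle hm)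
    _ = ∫ y in (1 : ℝ)..β, (y - 1) ^ (m + 1) / (m + 1) := by simp only [hinner]
    _ = (β - 1) ^ (m + 2) / ((m + 1) * (m + 2)) := by
        rw [intervalIntegral.integral_div, integral_sub_one_rpow (by linarith), div_div,
          add_assoc, one_add_one_eq_two, mul_comm]

theorem le_setIntegral_dependenceTriangle {f : ℝ × ℝ → ℝ} {K x t : ℝ} (hm : 0 ≤ m)
    (h1 : 1 ≤ t - x) (h2 : t - x ≤ x) (hf : IntegrableOn f (dependenceTriangle x t))
    (hf0 : 0 ≤ f) (hK : ∀ z ∈ characteristicTriangle (t - x), K * (z.2 - z.1 - 1) ^ m ≤ f z) :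
    K * ((t - x - 1) ^ (m + 2) / ((m + 1) * (m + 2))) ≤ ∫ z in dependenceTriangle x t, f z := by
  have hsub := characteristicTriangle_subset_dependenceTriangle h2
  calc _ = ∫ z in characteristicTriangle (t - x), K * (z.2 - z.1 - 1) ^ m := by
        rw [integral_const_mul, setIntegral_characteristicTriangle hm h1]
    _ ≤ ∫ z in characteristicTriangle (t - x), f z :=
        setIntegral_mono_on ((integrableOn_characteristicTriangle hm).const_mul K)
          (hf.mono_set hsub) (measurableSet_characteristicTriangle _) hK
    _ ≤ ∫ z in dependenceTriangle x t, f z :=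
        setIntegral_mono_set hf (ae_of_all _ hf0) hsub.eventuallyLE

end CharacteristicTriangle

section SourceTerm

/-- The source term `|u(y,s)|^p (1+y²)^{-(1+a)/2}` of the integral equation. -/
noncomputable def sourceTerm (p a : ℝ) (u : ℝ → ℝ → ℝ) (z : ℝ × ℝ) : ℝ :=
  |u z.1 z.2| ^ p / (1 + z.1 ^ 2) ^ ((1 + a) / 2)

/-- `u` is a supersolution on `ℝ × [0,T]` of the integral equation with free part `v`. -/
def IsSupersolution (p a T : ℝ) (v u : ℝ → ℝ → ℝ) : Prop :=
  ∀ x, ∀ t ∈ Icc 0 T, v x t + 1 / 2 * ∫ z in dependenceTriangle x t, sourceTerm p a u z ≤ u x t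

/-- The free part `(ε/2) ∫_{x-t}^{x+t} g` of the integral equation. -/
noncomputable def freePart (ε : ℝ) (g : ℝ → ℝ) (x t : ℝ) : ℝ :=
  ε / 2 * ∫ y in (x - t)..(x + t), g y

variable {p a T ε : ℝ} {u v : ℝ → ℝ → ℝ} {g : ℝ → ℝ}

theorem sourceTerm_nonneg : 0 ≤ sourceTerm p a u := fun z ↦ by
  simp only [sourceTerm, Pi.zero_apply]
  positivity

theorem integrableOn_sourceTerm (hp : 0 ≤ p)
    (hu : ContinuousOn (fun z : ℝ × ℝ ↦ u z.1 z.2) (univ ×ˢ Icc 0 T)) {t : ℝ}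
    (ht : t ∈ Icc 0 T) (x : ℝ) :
    IntegrableOn (sourceTerm p a u) (dependenceTriangle x t) := by
  have hweight : Continuous fun z : ℝ × ℝ ↦ (1 + z.1 ^ 2) ^ ((1 + a) / 2) :=
    Continuous.rpow_const (by fun_prop) fun z ↦ Or.inl (by positivity)
  have hcont : ContinuousOn (sourceTerm p a u) (univ ×ˢ Icc 0 T) :=
    (hu.abs.rpow_const fun _ _ ↦ Or.inr hp).div hweight.continuousOn fun z _ ↦ by positivity
  have hbox : Icc (x - t) (x + t) ×ˢ Icc 0 t ⊆ univ ×ˢ Icc 0 T :=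
    prod_mono (subset_univ _) (Icc_subset_Icc_right ht.2)
  exact ((hcont.mono hbox).integrableOn_compact (isCompact_Icc.prod isCompact_Icc)).mono_set
    (dependenceTriangle_subset x t)

theorem le_inv_one_add_sq_rpow {β y : ℝ} (ha : -1 ≤ a) (hβ : 1 ≤ β) (hy : |y| ≤ β) :
    2 ^ (-(1 + a) / 2) * β ^ (-(a + 1)) ≤ ((1 + y ^ 2) ^ ((1 + a) / 2))⁻¹ := by
  have hsq : 1 + y ^ 2 ≤ 2 * β ^ 2 := by nlinarith [sq_le_sq' (abs_le.1 hy).1 (abs_le.1 hy).2]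
  calc _ = ((2 * β ^ 2) ^ ((1 + a) / 2))⁻¹ := by
        rw [← rpow_neg (by positivity), mul_rpow (by norm_num) (by positivity),
          ← rpow_natCast β 2, ← rpow_mul (by positivity)]
        congr 2 <;> push_cast <;> ring
    _ ≤ _ := inv_anti₀ (by positivity) (rpow_le_rpow (by positivity) hsq (by linarith))

theorem IsSupersolution.of_iteratedIntegral (hp : 0 ≤ p)
    (hu : ContinuousOn (fun z : ℝ × ℝ ↦ u z.1 z.2) (univ ×ˢ Icc 0 T))
    (h : ∀ x, ∀ t ∈ Icc 0 T, v x t + 1 / 2 * (∫ s in (0 : ℝ)..t,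
      ∫ y in (x - t + s)..(x + t - s), sourceTerm p a u (y, s)) ≤ u x t) :
    IsSupersolution p a T v u := by
  intro x t ht
  rw [setIntegral_dependenceTriangle ht.1 (integrableOn_sourceTerm hp hu ht x)]
  exact h x t ht

theorem IsSupersolution.freePart_le (h : IsSupersolution p a T v u) (x : ℝ) {t : ℝ}
    (ht : t ∈ Icc 0 T) : v x t ≤ u x t := by
  have hint : 0 ≤ ∫ z in dependenceTriangle x t, sourceTerm p a u z :=
    integral_nonneg sourceTerm_nonneg
  exact (le_add_of_nonneg_right (by positivity)).trans (h x t ht)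

theorem IsSupersolution.mono {w : ℝ → ℝ → ℝ} (h : IsSupersolution p a T v u)
    (hwv : ∀ x, ∀ t ∈ Icc 0 T, w x t ≤ v x t) : IsSupersolution p a T w u :=
  fun x t ht ↦ (add_le_add_left (hwv x t ht) _).trans (h x t ht)

theorem freePart_nonneg (hε : 0 ≤ ε) (hg0 : 0 ≤ g) (x : ℝ) {t : ℝ} (ht : 0 ≤ t) :
    0 ≤ freePart ε g x t :=
  mul_nonneg (by positivity)
    (intervalIntegral.integral_nonneg (by linarith) fun y _ ↦ hg0 y)

theorem mul_half_integral_le_freePart (hε : 0 ≤ ε) (hg : LocallyIntegrable g) (hg0 : 0 ≤ g)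
    {x t : ℝ} (hx : 0 ≤ x) (h1 : 1 ≤ t - x) :
    ε * (1 / 2 * ∫ y in (-1 : ℝ)..1, g y) ≤ freePart ε g x t := by
  have hmono : ∫ y in (-1 : ℝ)..1, g y ≤ ∫ y in (x - t)..(x + t), g y :=
    intervalIntegral.integral_mono_interval (by linarith) (by norm_num) (by linarith)
      (ae_of_all _ hg0) (hg.integrableOn_isCompact isCompact_uIcc).intervalIntegrable
  calc _ = ε / 2 * ∫ y in (-1 : ℝ)..1, g y := by ring
    _ ≤ freePart ε g x t := mul_le_mul_of_nonneg_left hmono (by positivity)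

end SourceTerm

section Iteration

/-- The profile `β^{-(a+1)} (β-1)²`, `β = t - x`, whose powers bound `u` from below. -/
noncomputable def profile (a β : ℝ) : ℝ := β ^ (-(a + 1)) * (β - 1) ^ 2

/-- The lower bound `u(x,t) ≥ A {(t-x)^{-(a+1)} (t-x-1)²}^q` on `Γ₂`. -/
def ProfileBound (a T : ℝ) (u : ℝ → ℝ → ℝ) (A q : ℝ) : Prop :=
  ∀ x t, (x, t) ∈ Γ₂ T → A * profile a (t - x) ^ q ≤ u x t

/-- The factor gained when a `ProfileBound` with exponent `q` is inserted into the integral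
equation. -/
noncomputable def iterationGain (p a q : ℝ) : ℝ :=
  2 ^ (-(3 + a) / 2) / ((2 * p * q + 1) * (2 * p * q + 2))

variable {p a T A B q : ℝ} {u : ℝ → ℝ → ℝ}

theorem profile_nonneg {β : ℝ} (hβ : 0 ≤ β) : 0 ≤ profile a β := by
  unfold profile
  positivity

theorem ProfileBound.mono (h : ProfileBound a T u B q) (hAB : A ≤ B) :
    ProfileBound a T u A q := fun x t hxt ↦
  (mul_le_mul_of_nonneg_right hAB
    (rpow_nonneg (profile_nonneg (by linarith [hxt.2.2.1])) q)).trans (h x t hxt)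

theorem mul_sq_rpow {b c : ℝ} (hb : 0 ≤ b) (hc : 0 ≤ c) (r : ℝ) :
    (b * c ^ 2) ^ r = b ^ r * c ^ (2 * r) := by
  rw [mul_rpow hb (by positivity), ← rpow_natCast c 2, ← rpow_mul hc, Nat.cast_ofNat]

theorem le_profile {β ξ : ℝ} (ha : -1 ≤ a) (hξ : 0 < ξ) (hξβ : ξ ≤ β) :
    β ^ (-(a + 1)) * (ξ - 1) ^ 2 ≤ profile a ξ :=
  mul_le_mul_of_nonneg_right (rpow_le_rpow_of_nonpos hξ hξβ (by linarith)) (sq_nonneg _)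

theorem le_sourceTerm {β y s : ℝ} (hp : 0 ≤ p) (ha : -1 ≤ a) (hA : 0 ≤ A) (hq : 0 ≤ q)
    (hys : (y, s) ∈ characteristicTriangle β) (hu : A * profile a (s - y) ^ q ≤ u y s) :
    A ^ p * (β ^ (-(a + 1))) ^ (p * q) * (2 ^ (-(1 + a) / 2) * β ^ (-(a + 1))) *
      (s - y - 1) ^ (2 * p * q) ≤ sourceTerm p a u (y, s) := by
  obtain ⟨⟨hy1, hyβ⟩, hs1, hs2⟩ := mem_characteristicTriangle.1 hys
  have hξ : 0 ≤ s - y - 1 := by linarith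
  have hβ : 1 ≤ β := hy1.trans hyβ
  have hbase : 0 ≤ β ^ (-(a + 1)) * (s - y - 1) ^ 2 := by positivity
  have hpow : A ^ p * (β ^ (-(a + 1))) ^ (p * q) * (s - y - 1) ^ (2 * p * q) ≤ |u y s| ^ p := by
    calc _ = (A * (β ^ (-(a + 1)) * (s - y - 1) ^ 2) ^ q) ^ p := by
          rw [mul_rpow hA (by positivity), ← rpow_mul hbase, mul_comm q p,
            mul_sq_rpow (by positivity) hξ, mul_assoc, mul_assoc 2 p q]
      _ ≤ (A * profile a (s - y) ^ q) ^ p := by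
          gcongr
          exact le_profile ha (by linarith) (by linarith)
      _ ≤ |u y s| ^ p := by
          have := profile_nonneg (a := a) (show 0 ≤ s - y by linarith)
          gcongr
          exact hu.trans (le_abs_self _)
  have hweight := le_inv_one_add_sq_rpow ha hβ (abs_le.2 ⟨by linarith, hyβ⟩)
  calc _ = A ^ p * (β ^ (-(a + 1))) ^ (p * q) * (s - y - 1) ^ (2 * p * q) *
        (2 ^ (-(1 + a) / 2) * β ^ (-(a + 1))) := by ring
    _ ≤ |u y s| ^ p * ((1 + y ^ 2) ^ ((1 + a) / 2))⁻¹ :=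
        mul_le_mul hpow hweight (by positivity) (by positivity)
    _ = sourceTerm p a u (y, s) := (div_eq_mul_inv _ _).symm

theorem ProfileBound.iterate (hp : 0 ≤ p) (ha : -1 ≤ a)
    (hu : ContinuousOn (fun z : ℝ × ℝ ↦ u z.1 z.2) (univ ×ˢ Icc 0 T))
    (hsup : IsSupersolution p a T 0 u) (hA : 0 ≤ A) (hq : 0 ≤ q)
    (h : ProfileBound a T u A q) :
    ProfileBound a T u (A ^ p * iterationGain p a q) (p * q + 1) := by
  intro x t hxt
  have ⟨_, ht, h1, h2⟩ := mem_Γ₂.1 hxt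
  refine le_trans ?_ ((le_add_of_nonneg_left le_rfl).trans (hsup x t ht))
  have hint := le_setIntegral_dependenceTriangle (by positivity) h1 h2
    (integrableOn_sourceTerm hp hu ht x) sourceTerm_nonneg fun z hz ↦
      le_sourceTerm hp ha hA hq hz (h z.1 z.2 (characteristicTriangle_subset_Γ₂ hxt hz))
  refine le_of_eq_of_le ?_ (mul_le_mul_of_nonneg_left hint one_half_pos.le)
  have hbase : 0 < (t - x) ^ (-(a + 1)) := rpow_pos_of_pos (by linarith) _
  rw [iterationGain, profile, mul_sq_rpow hbase.le (by linarith), rpow_add_one hbase.ne',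
    show 2 * (p * q + 1) = 2 * p * q + 2 by ring,
    show -(3 + a) / 2 = -(1 + a) / 2 - 1 by ring, rpow_sub_one (by norm_num)]
  ring

end Iteration

section Constants

/-- The sum `S_j = ∑_{i=1}^{j-1} i / p^i`, with the summation index shifted by one. -/
noncomputable def weightedGeomSum (p : ℝ) (j : ℕ) : ℝ :=
  ∑ i ∈ Finset.range (j - 1), ((i : ℝ) + 1) / p ^ (i + 1)

/-- The closed form of the constants `C_{a,j}` in terms of `c = C_{a,1}`, for `j ≥ 1`. -/
noncomputable def iterationConst (p E F c : ℝ) (j : ℕ) : ℝ :=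
  exp (p ^ (j - 1) * log (c * F ^ (-weightedGeomSum p j) * E ^ (1 / (p - 1)))
    - log (E ^ (1 / (p - 1))))

variable {p E F c : ℝ}

theorem iterationConst_pos (j : ℕ) : 0 < iterationConst p E F c j := exp_pos _

theorem iterationConst_one (hE : 0 < E) (hc : 0 < c) : iterationConst p E F c 1 = c := by
  have hE' : 0 < E ^ (1 / (p - 1)) := by positivity
  simp only [iterationConst, weightedGeomSum, Nat.sub_self, Finset.range_zero, Finset.sum_empty,
    neg_zero, rpow_zero, mul_one, pow_zero, one_mul]
  rw [log_mul hc.ne' hE'.ne', add_sub_cancel_right, exp_log hc]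

theorem weightedGeomSum_succ (p : ℝ) (j : ℕ) :
    weightedGeomSum p (j + 1) = weightedGeomSum p j + j / p ^ j := by
  cases j <;> simp [weightedGeomSum, Finset.sum_range_succ]

theorem log_iterationConst (hE : 0 < E) (hF : 0 < F) (hc : 0 < c) (j : ℕ) :
    log (iterationConst p E F c j) =
      p ^ (j - 1) * (log c - weightedGeomSum p j * log F + log E / (p - 1)) -
        log E / (p - 1) := by
  rw [iterationConst, log_exp, log_mul (by positivity) (by positivity),
    log_mul (by positivity) (by positivity), log_rpow hF, log_rpow hE]
  ring

theorem iterationConst_succ (hp0 : p ≠ 0) (hp1 : p ≠ 1) (hE : 0 < E) (hF : 0 < F) (hc : 0 < c)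
    {j : ℕ} (hj : 1 ≤ j) :
    iterationConst p E F c (j + 1) = iterationConst p E F c j ^ p * (E / F ^ j) := by
  have hCj : 0 < iterationConst p E F c j := iterationConst_pos j
  refine log_injOn_pos (mem_Ioi.2 (iterationConst_pos (j + 1))) (mem_Ioi.2 (by positivity)) ?_
  rw [log_mul (by positivity) (by positivity), log_div (by positivity) (by positivity),
    log_rpow hCj, log_pow, log_iterationConst hE hF hc, log_iterationConst hE hF hc,
    weightedGeomSum_succ p j, Nat.add_sub_cancel, ← mul_pow_sub_one (by omega : j ≠ 0) p]
  have hp1' : p - 1 ≠ 0 := sub_ne_zero.2 hp1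
  field_simp
  ring

variable {a : ℝ}

theorem two_rpow_neg_le_iterationGain_zero (ha : -3 ≤ a) :
    2 ^ (-(a + 4)) ≤ iterationGain p a 0 := by
  calc (2 : ℝ) ^ (-(a + 4)) ≤ 2 ^ (-(3 + a) / 2 - 1) :=
        rpow_le_rpow_of_exponent_le (by norm_num) (by linarith)
    _ = iterationGain p a 0 := by
        rw [iterationGain, rpow_sub_one (by norm_num)]
        ring

theorem exponent_succ (hp : p ≠ 1) (j : ℕ) :
    (p ^ (j + 1) - 1) / (p - 1) = p * ((p ^ j - 1) / (p - 1)) + 1 := by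
  have hp1 : p - 1 ≠ 0 := sub_ne_zero.2 hp
  field_simp
  ring

theorem div_pow_le_iterationGain (hp : 1 < p) (ha : -3 ≤ a) (j : ℕ) :
    (p - 1) ^ 2 / (2 ^ (a + 5) * p ^ 2) / (p ^ 2) ^ j ≤
      iterationGain p a ((p ^ j - 1) / (p - 1)) := by
  have hp1 : 0 < p - 1 := by linarith
  set q := (p ^ j - 1) / (p - 1)
  have hq0 : 0 ≤ q := div_nonneg (by linarith [one_le_pow₀ hp.le (n := j)]) hp1.le
  have hpq : p * q + 1 ≤ p ^ (j + 1) / (p - 1) := by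
    rw [← exponent_succ hp.ne']
    gcongr
    linarith
  have hden : (2 * p * q + 1) * (2 * p * q + 2) ≤ 4 * (p ^ (j + 1) / (p - 1)) ^ 2 := by
    have hpq0 : 0 ≤ p * q := by positivity
    calc _ ≤ 4 * (p * q + 1) ^ 2 := by nlinarith
      _ ≤ _ := by gcongr
  have htwo : (2 : ℝ) ^ (-(a + 5)) ≤ 2 ^ (-(3 + a) / 2) / 4 := by
    rw [show (4 : ℝ) = 2 ^ (2 : ℝ) by norm_num, ← rpow_sub (by norm_num)]
    exact rpow_le_rpow_of_exponent_le (by norm_num) (by linarith)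
  calc _ = (2 : ℝ) ^ (-(a + 5)) / (p ^ (j + 1) / (p - 1)) ^ 2 := by
        rw [rpow_neg (by norm_num)]
        field_simp
        ring
    _ ≤ 2 ^ (-(3 + a) / 2) / 4 / (p ^ (j + 1) / (p - 1)) ^ 2 := by gcongr
    _ = 2 ^ (-(3 + a) / 2) / (4 * (p ^ (j + 1) / (p - 1)) ^ 2) := div_div _ _ _
    _ ≤ iterationGain p a q := by
        unfold iterationGain
        gcongr

end Constants

theorem profileBound_iterationConst {p a T A : ℝ} {u : ℝ → ℝ → ℝ} (hp : 1 < p) (ha : -1 ≤ a)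
    (hu : ContinuousOn (fun z : ℝ × ℝ ↦ u z.1 z.2) (univ ×ˢ Icc 0 T))
    (hsup : IsSupersolution p a T 0 u) (hA : 0 < A) (h : ProfileBound a T u A 0) {j : ℕ}
    (hj : 1 ≤ j) :
    ProfileBound a T u
      (iterationConst p ((p - 1) ^ 2 / (2 ^ (a + 5) * p ^ 2)) (p ^ 2) (A ^ p * 2 ^ (-(a + 4))) j)
      ((p ^ j - 1) / (p - 1)) := by
  have hp1 : 0 < p - 1 := by linarith
  have hE : 0 < (p - 1) ^ 2 / (2 ^ (a + 5) * p ^ 2) := div_pos (pow_pos hp1 2) (by positivity)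
  induction j, hj using Nat.le_induction with
  | base =>
    have hfirst := h.iterate (by linarith) ha hu hsup hA.le le_rfl
    rw [mul_zero, zero_add] at hfirst
    rw [pow_one, div_self hp1.ne', iterationConst_one hE (by positivity)]
    exact hfirst.mono (mul_le_mul_of_nonneg_left
      (two_rpow_neg_le_iterationGain_zero (by linarith)) (by positivity))
  | succ j hj ih =>
    have hq : 0 ≤ (p ^ j - 1) / (p - 1) :=
      div_nonneg (sub_nonneg.2 (one_le_pow₀ hp.le)) hp1.le
    have hnext := ih.iterate (by linarith) ha hu hsup (iterationConst_pos j).le hq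
    rw [exponent_succ hp.ne',
      iterationConst_succ (by positivity) hp.ne' hE (by positivity) (by positivity) hj]
    exact hnext.mono (mul_le_mul_of_nonneg_left (div_pow_le_iterationGain hp (by linarith) j)
      (rpow_nonneg (iterationConst_pos j).le p))

theorem stmt_8_general (p a ε T : ℝ) (hp : 1 < p) (ha : -1 ≤ a) (hε : 0 < ε)
    (g : ℝ → ℝ) (hg : LocallyIntegrable g) (hg0 : ∀ x, 0 ≤ g x)
    (hgint : 0 < ∫ y in (-1 : ℝ)..1, g y)
    (c₀ : ℝ) (hc₀ : c₀ = 1 / 2 * ∫ y in (-1 : ℝ)..1, g y)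
    (u : ℝ → ℝ → ℝ) (hu : ContinuousOn (fun z : ℝ × ℝ ↦ u z.1 z.2) (univ ×ˢ Icc 0 T))
    (hsup : ∀ x t : ℝ, t ∈ Icc (0 : ℝ) T →
      ε / 2 * (∫ y in (x - t)..(x + t), g y)
        + 1 / 2 * (∫ s in (0 : ℝ)..t, ∫ y in (x - t + s)..(x + t - s),
            |u y s| ^ p / (1 + y ^ 2) ^ ((1 + a) / 2)) ≤ u x t)
    (E F k : ℝ) (hE : E = (p - 1) ^ 2 / ((2 : ℝ) ^ (a + 5) * p ^ 2))
    (hF : F = p ^ 2) (hk : k = (2 : ℝ) ^ (-(a + 4)))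
    (S : ℕ → ℝ) (hS : ∀ j : ℕ, S j = ∑ i ∈ Finset.range (j - 1), ((i : ℝ) + 1) / p ^ (i + 1))
    (C : ℕ → ℝ) (hC1 : C 1 = c₀ ^ p * k * ε ^ p)
    (hCj : ∀ j : ℕ, 2 ≤ j →
      C j = exp (p ^ (j - 1) * log (C 1 * F ^ (-(S j)) * E ^ (1 / (p - 1)))
        - log (E ^ (1 / (p - 1))))) :
    ∀ j : ℕ, 1 ≤ j → ∀ x t : ℝ, 0 ≤ x → t ∈ Icc (0 : ℝ) T → 1 ≤ t - x → t - x ≤ x →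
      C j * ((t - x) ^ (-(a + 1)) * (t - x - 1) ^ 2) ^ ((p ^ j - 1) / (p - 1)) ≤ u x t := by
  have hc₀pos : 0 < c₀ := by rw [hc₀]; positivity
  have hE0 : 0 < E := hE ▸ div_pos (pow_pos (sub_pos.2 hp) 2) (by positivity)
  have hC1' : C 1 = (ε * c₀) ^ p * 2 ^ (-(a + 4)) := by
    rw [hC1, hk, mul_rpow hε.le hc₀pos.le]
    ring
  have hC (j : ℕ) (hj : 1 ≤ j) : C j = iterationConst p E F (C 1) j := by
    rcases hj.eq_or_lt with rfl | hj2
    · exact (iterationConst_one hE0 (by rw [hC1']; positivity)).symm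
    · rw [hCj j hj2, hS, iterationConst, weightedGeomSum]
  have hsuper : IsSupersolution p a T (freePart ε g) u :=
    .of_iteratedIntegral (by linarith) hu hsup
  have hsuper0 : IsSupersolution p a T 0 u :=
    hsuper.mono fun x t ht ↦ freePart_nonneg hε.le hg0 x ht.1
  have hstart : ProfileBound a T u (ε * c₀) 0 := by
    rintro x t ⟨hx, ht, h1, -⟩
    rw [rpow_zero, mul_one, hc₀]
    exact (mul_half_integral_le_freePart hε.le hg hg0 hx h1).trans (hsuper.freePart_le x ht)
  intro j hj x t hx ht h1 h2
  rw [hC j hj, hE, hF, hC1']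
  exact profileBound_iterationConst hp ha hu hsuper0 (by positivity) hstart hj x t
    ⟨hx, ht, h1, h2⟩

/-- Iteration estimate in the case `-1 ≤ a < 0`: a continuous solution of the integral
equation satisfies `u(x,t) ≥ C_{a,j} {(t-x)^{-(a+1)} (t-x-1)²}^{a_j}` on
`Γ₂ = {(x,t) ∈ [0,∞)×[0,T] : x ≥ t-x ≥ 1}`, where `a_j = (p^j - 1)/(p-1)`. -/
theorem stmt_8 (p a ε T : ℝ) (hp : 1 < p) (ha1 : -1 ≤ a) (ha2 : a < 0)
    (hε : 0 < ε) (hT : 0 < T)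
    (g : ℝ → ℝ) (hg : ContDiff ℝ 1 g) (hgpos : ∀ x, 0 ≤ g x)
    (hgint : 0 < ∫ y in (-1:ℝ)..1, g y)
    (c₀ : ℝ) (hc₀ : c₀ = 1 / 2 * ∫ y in (-1:ℝ)..1, g y)
    (u : ℝ → ℝ → ℝ)
    (hu : ContinuousOn (fun q : ℝ × ℝ => u q.1 q.2) (Set.univ ×ˢ Set.Icc 0 T))
    (heq : ∀ x t : ℝ, t ∈ Set.Icc (0:ℝ) T →
      u x t = ε / 2 * (∫ y in (x - t)..(x + t), g y)
        + 1 / 2 * ∫ s in (0:ℝ)..t, ∫ y in (x - t + s)..(x + t - s),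
            |u y s| ^ p / (1 + y ^ 2) ^ ((1 + a) / 2))
    (E F k : ℝ) (hE : E = (p - 1) ^ 2 / ((2:ℝ) ^ (a + 5) * p ^ 2))
    (hF : F = p ^ 2) (hk : k = (2:ℝ) ^ (-(a + 4)))
    (S : ℕ → ℝ) (hS : ∀ j : ℕ, S j = ∑ i ∈ Finset.range (j - 1), ((i:ℝ) + 1) / p ^ (i + 1))
    (C : ℕ → ℝ) (hC1 : C 1 = c₀ ^ p * k * ε ^ p)
    (hCj : ∀ j : ℕ, 2 ≤ j →
      C j = Real.exp (p ^ (j - 1) * Real.log (C 1 * F ^ (-(S j)) * E ^ (1 / (p - 1)))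
        - Real.log (E ^ (1 / (p - 1))))) :
    ∀ j : ℕ, 1 ≤ j → ∀ x t : ℝ, 0 ≤ x → t ∈ Set.Icc (0:ℝ) T →
      1 ≤ t - x → t - x ≤ x →
      C j * ((t - x) ^ (-(a + 1)) * (t - x - 1) ^ 2) ^ ((p ^ j - 1) / (p - 1)) ≤ u x t :=
  stmt_8_general p a ε T hp ha1 hε g hg.continuous.locallyIntegrable hgpos hgint c₀ hc₀ u hu
    (fun x t ht ↦ (heq x t ht).ge) E F k hE hF hk S hS C hC1 hCj
end
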